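/- arXiv:1503.00918 — 2 statements merged into one kernel-verified Lean document; each statement's English description precedes it below -/
import Mathlib

section
/- Let n ≥ 2 and let x_1,…,x_{n−1}, t, y, v_1,…,v_n, u_1 ∈ P be such that x_1,…,x_{n−1}, y are pairwise distinct and v_1,…,v_n, u_1 are pairwise distinct. Then in Q_n(P): Δ((x_1,…,x_{n−1},t),(v_1,v_2,…,v_n)) / Δ((x_1,…,x_{n−1},y),(v_1,v_2,…,v_n)) = Δ((x_1,…,x_{n−1},t),(u_1,v_2,…,v_n)) / Δ((x_1,…,x_{n−1},y),(u_1,v_2,…,v_n)). -/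
noncomputable section

open scoped Classical
open MvPolynomial

set_option maxHeartbeats 1000000
set_option synthInstance.maxHeartbeats 400000

instance fact01 : Fact ((0:ℝ) < 1) := ⟨one_pos⟩

/-- The circle, modelled as `ℝ/ℤ`. -/
abbrev Circle1 : Type := AddCircle (1:ℝ)

/-- The coordinate in `[0,1)` of the point `x` of the circle obtained after removing the
point `o` and identifying the complement of `o` with an interval. -/
def coordAt (o x : Circle1) : ℝ := ((AddCircle.equivIco 1 0) (x - o) : ℝ)

/-- The sign `△` of a real number, as a rational number in `{-1, 0, 1}`. -/
def sgnQ (a : ℝ) : ℚ := if a < 0 then -1 else if a = 0 then 0 else 1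

/-- The linking number `J(rx, sy)` of the chords `rx` and `sy`, computed using the
cut point `o`. -/
def linkingAt (o r x s y : Circle1) : ℚ :=
  (1/2) * (sgnQ (coordAt o r - coordAt o x) * sgnQ (coordAt o r - coordAt o y)
        * sgnQ (coordAt o y - coordAt o x)
      - sgnQ (coordAt o r - coordAt o x) * sgnQ (coordAt o r - coordAt o s)
        * sgnQ (coordAt o s - coordAt o x))

lemma circle1_infinite : Infinite Circle1 := by
  have h : (Set.Ico (0:ℝ) (0+1)).Infinite := Set.Ico_infinite (by norm_num)
  haveI := h.to_subtype
  exact Infinite.of_injective (fun q : Set.Ico (0:ℝ) (0+1) => (AddCircle.equivIco 1 0).symm q)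
    ((AddCircle.equivIco 1 0).symm.injective)

lemma exists_cut (r x s y : Circle1) :
    ∃ o : Circle1, o ≠ r ∧ o ≠ x ∧ o ≠ s ∧ o ≠ y := by
  haveI : Infinite Circle1 := circle1_infinite
  have hfin : ({r, x, s, y} : Set Circle1).Finite :=
    (((Set.finite_singleton y).insert s).insert x).insert r
  obtain ⟨o, ho⟩ := hfin.infinite_compl.nonempty
  simp only [Set.mem_compl_iff, Set.mem_insert_iff, Set.mem_singleton_iff, not_or] at ho
  exact ⟨o, ho.1, ho.2.1, ho.2.2.1, ho.2.2.2⟩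

/-- The linking number `J(rx, sy)` of the chords `rx` and `sy` (computed with respect to
some cut point distinct from the four points; by the independence of the choice this is
the linking number). -/
def linkQ (r x s y : Circle1) : ℚ := linkingAt (exists_cut r x s y).choose r x s y

/-- The set of points of the circle `l`, listed in anticlockwise (cyclic) order:
there is a cut point `o` avoiding them such that the induced coordinates are
strictly increasing along the list. -/
def AnticlockwiseList (l : List Circle1) : Prop :=
  ∃ o : Circle1, (∀ p ∈ l, p ≠ o) ∧ (l.map (coordAt o)).Chain' (· < ·)

/-- Index type for the generators `xy` of the swapping ring of `P`
(one generator for each ordered pair of distinct points; the generators `xx`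
are identified with `0`). -/
abbrev SwapIdx (P : Set Circle1) : Type := {q : (↥P) × (↥P) // q.1 ≠ q.2}

/-- The swapping ring `Z(P)`: the polynomial ring over `K` on the generators `xy`,
`x ≠ y ∈ P` (this realizes the commutative ring generated by all ordered pairs `xy`
subject to the relations `xx = 0`). -/
abbrev SwapRing (K : Type) [Field K] (P : Set Circle1) : Type := MvPolynomial (SwapIdx P) K

/-- The generator `xy` of the swapping ring (equal to `0` when `x = y`). -/
def gen (K : Type) [Field K] (P : Set Circle1) (x y : ↥P) : SwapRing K P :=
  if h : x ≠ y then MvPolynomial.X (⟨(x, y), h⟩ : SwapIdx P) else 0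

/-- The value of the `(c1,c2)`-swapping bracket on two generators `rx` and `sy`:
`J(rx,sy) • (c1 • ry·sx + c2 • rx·sy)`. -/
def genBr (K : Type) [Field K] (P : Set Circle1) (c1 c2 : K) (g g' : SwapIdx P) :
    SwapRing K P :=
  ((linkQ g.1.1.1 g.1.2.1 g'.1.1.1 g'.1.2.1 : ℚ) : K) •
    (c1 • (gen K P g.1.1 g'.1.2 * gen K P g'.1.1 g.1.2)
      + c2 • (gen K P g.1.1 g.1.2 * gen K P g'.1.1 g'.1.2))

/-- The `(c1,c2)`-swapping bracket on `Z(P)`: the biderivation extending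
`{rx, sy} = J(rx,sy)·(c1·ry·sx + c2·rx·sy)` by the Leibniz rule in each argument.
The swapping bracket is the case `c1 = 1, c2 = 0`. -/
def swapBr (K : Type) [Field K] (P : Set Circle1) (c1 c2 : K) (a b : SwapRing K P) :
    SwapRing K P :=
  (MvPolynomial.mkDerivation K
    (fun g : SwapIdx P => (MvPolynomial.mkDerivation K (genBr K P c1 c2 g)) b)) a

/-- `Δ((x_1,…,x_m),(y_1,…,y_m)) = det (x_i y_j)` in the swapping ring. -/
def Dmat (K : Type) [Field K] (P : Set Circle1) (m : ℕ) (xs ys : Fin m → ↥P) :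
    SwapRing K P :=
  Matrix.det (Matrix.of fun i j => gen K P (xs i) (ys j))

/-- The ideal `R_n(P)` of `Z(P)` generated by all `(n+1)×(n+1)` determinants
`Δ((x_1,…,x_{n+1}),(y_1,…,y_{n+1}))`. -/
def Rideal (K : Type) [Field K] (P : Set Circle1) (n : ℕ) : Ideal (SwapRing K P) :=
  Ideal.span {D : SwapRing K P | ∃ xs ys : Fin (n+1) → ↥P, D = Dmat K P (n+1) xs ys}

/-- The rank `n` swapping ring `Z_n(P) = Z(P)/R_n(P)`. -/
abbrev ZnRing (K : Type) [Field K] (P : Set Circle1) (n : ℕ) : Type :=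
  SwapRing K P ⧸ Rideal K P n

/-- The quotient map `Z(P) → Z_n(P)`. -/
def toZn (K : Type) [Field K] (P : Set Circle1) (n : ℕ) :
    SwapRing K P →+* ZnRing K P n := Ideal.Quotient.mk (Rideal K P n)

/-- The total fraction ring `Q_n(P)` of the rank `n` swapping ring. -/
abbrev QnRing (K : Type) [Field K] (P : Set Circle1) (n : ℕ) : Type :=
  Localization (nonZeroDivisors (ZnRing K P n))

/-- The canonical map `Z(P) → Q_n(P)`. -/
def toQn (K : Type) [Field K] (P : Set Circle1) (n : ℕ) :
    SwapRing K P →+* QnRing K P n :=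
  (algebraMap (ZnRing K P n) (QnRing K P n)).comp (toZn K P n)

/-- `Bq` is the extension to the total fraction ring `Q_n(P)` of the `(c1,c2)`-swapping
bracket of the rank `n` swapping algebra: it agrees with the swapping bracket on the image
of `Z(P)` and satisfies the Leibniz rule in both arguments (these properties determine it
uniquely). -/
def IsQnBracket (K : Type) [Field K] (P : Set Circle1) (n : ℕ) (c1 c2 : K)
    (Bq : QnRing K P n → QnRing K P n → QnRing K P n) : Prop :=
  (∀ a b : SwapRing K P,
      Bq (toQn K P n a) (toQn K P n b) = toQn K P n (swapBr K P c1 c2 a b)) ∧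
  (∀ a b c : QnRing K P n, Bq (a * b) c = a * Bq b c + b * Bq a c) ∧
  (∀ a b c : QnRing K P n, Bq a (b * c) = b * Bq a c + c * Bq a b)

/-- The `n`-tuple `(x_1, …, x_a, y_1, …, y_b, z_1, …, z_{n-a-b})` built from three
families of points (families are indexed from `0`, i.e. `x 0 = x_1`). -/
def rows3 {α : Type*} {n : ℕ} (x y z : ℕ → α) (a b : ℕ) : Fin n → α :=
  fun i => if (i : ℕ) < a then x (i : ℕ)
    else if (i : ℕ) < a + b then y ((i : ℕ) - a)
    else z ((i : ℕ) - (a + b))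

/-- The `n`-tuple `(x_1, …, x_a, y_1, …, y_b, z_1, …, z_{n-1-a-b}, w)` built from three
families of points and a final point `w`. -/
def rows3s {α : Type*} {n : ℕ} (x y z : ℕ → α) (a b : ℕ) (w : α) : Fin n → α :=
  fun i => if (i : ℕ) < a then x (i : ℕ)
    else if (i : ℕ) < a + b then y ((i : ℕ) - a)
    else if (i : ℕ) < n - 1 then z ((i : ℕ) - (a + b))
    else w

/-- The `n`-tuple `(x_1, …, x_{n-1}, t)`. -/
def snocTup {α : Type*} {n : ℕ} (x : ℕ → α) (t : α) : Fin n → α :=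
  fun i => if (i : ℕ) < n - 1 then x (i : ℕ) else t

/-- The list `f_a, f_{a-1}, …, f_1` (descending enumeration). -/
def descPts (f : ℕ → Circle1) (a : ℕ) : List Circle1 := ((List.range a).map f).reverse

/-- The list `f_1, f_2, …, f_a` (ascending enumeration). -/
def ascPts (f : ℕ → Circle1) (a : ℕ) : List Circle1 := (List.range a).map f

/-- The `(n×n)`-determinant quotient `Δ(numR, v)/Δ(denR, v)` as an element of the total
fraction ring `Q_n(P)`. -/
def EQuot (K : Type) [Field K] (P : Set Circle1) (n : ℕ)
    (numR denR v : Fin n → ↥P)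
    (h : toZn K P n (Dmat K P n denR v) ∈ nonZeroDivisors (ZnRing K P n)) :
    QnRing K P n :=
  Localization.mk (toZn K P n (Dmat K P n numR v)) ⟨toZn K P n (Dmat K P n denR v), h⟩


section SFT

/-- Lexicographic key of a matrix of exponents. -/
def lkey {ι : Type} (p : ι → ι → ℕ) : Lex ((ι ×ₗ ι) → ℕ) :=
  toLex fun s => p (ofLex s).1 (ofLex s).2

lemma lkey_inj {ι : Type} {p p' : ι → ι → ℕ} (h : lkey p = lkey p') : p = p' := by
  funext i j
  have := congrFun (toLex.injective h) (toLex (i, j))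
  simpa using this

lemma lkey_lt {ι : Type} [LinearOrder ι] {p p' : ι → ι → ℕ} (h : lkey p < lkey p') :
    ∃ i j, p i j < p' i j ∧ (∀ i' j', i' < i → p i' j' = p' i' j') ∧
      (∀ j', j' < j → p i j' = p' i j') := by
  obtain ⟨s, hs, hlt⟩ := h
  refine ⟨(ofLex s).1, (ofLex s).2, hlt, ?_, ?_⟩
  · intro i' j' hi
    exact hs (toLex (i', j')) (Prod.Lex.lt_iff.2 (Or.inl hi))
  · intro j' hj
    exact hs (toLex ((ofLex s).1, j')) (Prod.Lex.lt_iff.2 (Or.inr ⟨rfl, hj⟩))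

lemma exists_gt_of_sum {ι : Type} [LinearOrder ι] [Fintype ι] (f g : ι → ℕ) (j : ι)
    (hs : ∑ k, f k = ∑ k, g k) (hl : ∀ k, k < j → f k = g k) (hj : f j < g j) :
    ∃ k, j < k ∧ g k < f k := by
  by_contra hcon
  push Not at hcon
  have : ∑ k, f k < ∑ k, g k := by
    apply Finset.sum_lt_sum
    · intro k _
      rcases lt_trichotomy k j with h | h | h
      · exact (hl k h).le
      · subst h; exact hj.le
      · exact hcon k h
    · exact ⟨j, Finset.mem_univ _, hj⟩
  omega

lemma lkey_min {ι : Type} [LinearOrder ι] [Fintype ι] (p p' : ι → ι → ℕ)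
    (hr : ∀ i, ∑ j, p i j = ∑ j, p' i j) (hc : ∀ j, ∑ i, p i j = ∑ i, p' i j)
    (ha : ∀ i j i' j', p i j ≠ 0 → p i' j' ≠ 0 → i < i' → ¬ j < j') :
    lkey p ≤ lkey p' := by
  by_contra hcon
  obtain ⟨i, j, h1, h2, h3⟩ := lkey_lt (not_le.1 hcon)
  obtain ⟨j2, hj2, hj2'⟩ := exists_gt_of_sum (p' i) (p i) j (hr i).symm h3 h1
  obtain ⟨i2, hi2, hi2'⟩ := exists_gt_of_sum (fun k => p k j2) (fun k => p' k j2) i (hc j2)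
    (fun k hk => (h2 k j2 hk).symm) hj2'
  exact ha i j i2 j2 (by omega) (by omega) hi2 hj2

lemma lkey_max {ι : Type} [LinearOrder ι] [Fintype ι] (p p' : ι → ι → ℕ)
    (hr : ∀ i, ∑ j, p i j = ∑ j, p' i j) (hc : ∀ j, ∑ i, p i j = ∑ i, p' i j)
    (ha : ∀ i j i' j', p i j ≠ 0 → p i' j' ≠ 0 → i < i' → ¬ j' < j) :
    lkey p' ≤ lkey p := by
  by_contra hcon
  obtain ⟨i, j, h1, h2, h3⟩ := lkey_lt (not_le.1 hcon)
  obtain ⟨j2, hj2, hj2'⟩ := exists_gt_of_sum (p i) (p' i) j (hr i) h3 h1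
  obtain ⟨i2, hi2, hi2'⟩ := exists_gt_of_sum (fun k => p k j) (fun k => p' k j) i (hc j)
    (fun k hk => (h2 k j hk)) h1
  exact ha i j2 i2 j (by omega) (by omega) hi2 hj2

/-- Colouring a strict order without long chains. -/
lemma chain_colour {σ : Type} (R : σ → σ → Prop) (hR : ∀ a b c, R a b → R b c → R a c) :
    ∀ (n : ℕ) (T : Set σ),
      (¬ ∃ c : Fin (n+1) → σ, (∀ k, c k ∈ T) ∧ ∀ k l, k < l → R (c k) (c l)) →
      ∃ h : σ → ℕ, (∀ s ∈ T, h s < n) ∧ ∀ s ∈ T, ∀ s' ∈ T, R s s' → h s < h s' := by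
  intro n
  induction n with
  | zero =>
    intro T hT
    have hE : ∀ s, s ∉ T := fun s hs => hT ⟨fun _ => s, fun _ => hs, fun k l hkl => by
      exact absurd hkl (by simp [Subsingleton.elim (α := Fin 1) k l])⟩
    exact ⟨fun _ => 0, fun s hs => absurd hs (hE s), fun s hs => absurd hs (hE s)⟩
  | succ n ih =>
    intro T hT
    let T' : Set σ := {s | s ∈ T ∧ ∃ t ∈ T, R t s}
    obtain ⟨h', h1, h2⟩ := ih T' (by
      rintro ⟨c, hc, hch⟩
      obtain ⟨t, ht, htc⟩ := (hc 0).2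
      apply hT
      refine ⟨Fin.cons t c, ?_, ?_⟩
      · intro k
        refine Fin.cases ?_ (fun k => ?_) k
        · simpa using ht
        · simpa using (hc k).1
      · intro k l
        refine Fin.cases ?_ (fun k => ?_) k
        · refine Fin.cases ?_ (fun l => ?_) l
          · intro h; exact absurd h (lt_irrefl _)
          · intro _
            simp only [Fin.cons_zero, Fin.cons_succ]
            by_cases hl : l = 0
            · rw [hl]; exact htc
            · exact hR _ _ _ htc (hch _ _ (Fin.pos_iff_ne_zero.2 hl))
        · refine Fin.cases ?_ (fun l => ?_) l
          · intro h; exact absurd h (Fin.not_lt_zero _)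
          · intro h
            simp only [Fin.cons_succ]
            exact hch _ _ (Fin.succ_lt_succ_iff.1 h))
    refine ⟨fun s => if s ∈ T' then h' s + 1 else 0, ?_, ?_⟩
    · intro s hs
      by_cases hs' : s ∈ T'
      · simp only [hs', if_true]; have := h1 s hs'; omega
      · simp [hs']
    · intro s hs s' hs' hr
      have hm : s' ∈ T' := ⟨hs', s, hs, hr⟩
      by_cases hm' : s ∈ T'
      · simp only [hm, hm', if_true]; have := h2 s hm' s' hm hr; omega
      · simp [hm, hm']

variable {ι : Type} (n : ℕ)

/-- The variables of the polynomial ring in which vectors and covectors live. -/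
abbrev VV (ι : Type) (n : ℕ) : Type := (ι × Fin n) ⊕ (ι × Fin n)

/-- pairing of the vector `i` and the covector `j`. -/
def pair (i j : ι) : MvPolynomial (VV ι n) ℚ :=
  ∑ k : Fin n, X (Sum.inl (i, k)) * X (Sum.inr (j, k))

/-- The map to vectors and covectors. -/
def phi : MvPolynomial (ι × ι) ℚ →ₐ[ℚ] MvPolynomial (VV ι n) ℚ :=
  aeval fun s => pair n s.1 s.2

/-- generic minor -/
def gminor (m : ℕ) (xs ys : Fin m → ι) : MvPolynomial (ι × ι) ℚ :=
  Matrix.det (Matrix.of fun i j => X (xs i, ys j))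

/-- generic determinantal ideal -/
def gideal (ι : Type) (n : ℕ) : Ideal (MvPolynomial (ι × ι) ℚ) :=
  Ideal.span {D | ∃ xs ys : Fin (n+1) → ι, D = gminor (n+1) xs ys}

lemma det_pair (m : ℕ) (xs ys : Fin m → ι) :
    (Matrix.of fun i j => pair n (xs i) (ys j)) =
      (Matrix.of fun (i : Fin m) (k : Fin n) => (X (Sum.inl (xs i, k)) : MvPolynomial (VV ι n) ℚ)) *
      (Matrix.of fun (k : Fin n) (j : Fin m) => (X (Sum.inr (ys j, k)) : MvPolynomial (VV ι n) ℚ)) := by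
  ext1 i j
  simp [Matrix.mul_apply, pair]

lemma det_mul_small {R : Type} [CommRing R] (A : Matrix (Fin (n+1)) (Fin n) R)
    (B : Matrix (Fin n) (Fin (n+1)) R) : (A * B).det = 0 := by
  have : A * B = (Matrix.of fun (i k : Fin (n+1)) => (Fin.snoc (α := fun _ => R) (A i) 0 k : R)) *
      (Matrix.of fun (k j : Fin (n+1)) =>
        (Fin.snoc (α := fun _ => R) (fun k => B k j) 0 k : R)) := by
    ext1 i j
    simp [Matrix.mul_apply, Fin.sum_univ_castSucc]
  rw [this, Matrix.det_mul, Matrix.det_eq_zero_of_column_eq_zero (Fin.last n), zero_mul]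
  intro i
  simp

lemma det_pair_succ (xs ys : Fin (n+1) → ι) :
    Matrix.det (Matrix.of fun i j => pair n (xs i) (ys j)) = 0 := by
  rw [det_pair]
  exact det_mul_small n _ _

lemma phi_gminor (m : ℕ) (xs ys : Fin m → ι) :
    phi n (gminor m xs ys) = Matrix.det (Matrix.of fun i j => pair n (xs i) (ys j)) := by
  rw [gminor, AlgHom.map_det]
  congr 1
  ext1 i j
  simp [phi]

lemma phi_gideal {F : MvPolynomial (ι × ι) ℚ} (hF : F ∈ gideal ι n) : phi n F = 0 := by
  have : gideal ι n ≤ RingHom.ker (phi (ι := ι) n) := by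
    rw [gideal, Ideal.span_le]
    rintro _ ⟨xs, ys, rfl⟩
    simp only [SetLike.mem_coe, RingHom.mem_ker]
    rw [phi_gminor, det_pair_succ]
  exact this hF


/-- no long chain in the support -/
def IsGood [LinearOrder ι] (m : ι × ι →₀ ℕ) : Prop :=
  ¬ ∃ c : Fin (n+1) → ι × ι, (∀ k, c k ∈ {s | m s ≠ 0}) ∧
    ∀ k l, k < l → (c k).1 < (c l).1 ∧ (c k).2 < (c l).2

/-- key of a monomial -/
def mkey (m : ι × ι →₀ ℕ) : Lex ((ι ×ₗ ι) → ℕ) := lkey fun i j => m (i, j)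

lemma mkey_add (m m' : ι × ι →₀ ℕ) : mkey (m + m') = mkey m + mkey m' := rfl

lemma mkey_inj {m m' : ι × ι →₀ ℕ} (h : mkey m = mkey m') : m = m' := by
  have := lkey_inj h
  ext ⟨i, j⟩
  exact congrFun (congrFun this i) j

/-- exponents of the terms of a minor -/
def eexp {m : ℕ} (c : Fin m → ι × ι) (τ : Equiv.Perm (Fin m)) : ι × ι →₀ ℕ :=
  ∑ k, Finsupp.single ((c (τ k)).1, (c k).2) 1

lemma eexp_apply {m : ℕ} (c : Fin m → ι × ι) (τ : Equiv.Perm (Fin m)) (i j : ι) :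
    eexp c τ (i, j) = ∑ k, if (c (τ k)).1 = i ∧ (c k).2 = j then 1 else 0 := by
  simp [eexp, Finsupp.finsetSum_apply, Finsupp.single_apply, Prod.ext_iff]

lemma eexp_row [Fintype ι] {m : ℕ} (c : Fin m → ι × ι) (τ : Equiv.Perm (Fin m)) (i : ι) :
    ∑ j, eexp c τ (i, j) = ∑ k, if (c k).1 = i then 1 else 0 := by
  simp only [eexp_apply]
  rw [Finset.sum_comm, ← Equiv.sum_comp τ (fun k => if (c k).1 = i then 1 else 0)]
  refine Finset.sum_congr rfl fun k _ => ?_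
  by_cases h : (c (τ k)).1 = i <;> simp [h]

lemma eexp_col [Fintype ι] {m : ℕ} (c : Fin m → ι × ι) (τ : Equiv.Perm (Fin m)) (j : ι) :
    ∑ i, eexp c τ (i, j) = ∑ k, if (c k).2 = j then 1 else 0 := by
  simp only [eexp_apply]
  rw [Finset.sum_comm]
  refine Finset.sum_congr rfl fun k _ => ?_
  by_cases h : (c k).2 = j <;> simp [h]

lemma eexp_ne_zero {m : ℕ} (c : Fin m → ι × ι) (τ : Equiv.Perm (Fin m)) (i j : ι) :
    eexp c τ (i, j) ≠ 0 ↔ ∃ k, (c (τ k)).1 = i ∧ (c k).2 = j := by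
  rw [eexp_apply, Ne, Finset.sum_eq_zero_iff]
  simp

lemma eexp_lt [LinearOrder ι] [Fintype ι] {m : ℕ} (c : Fin m → ι × ι)
    (hc : ∀ k l, k < l → (c k).1 < (c l).1 ∧ (c k).2 < (c l).2)
    (τ : Equiv.Perm (Fin m)) (hτ : τ ≠ 1) : mkey (eexp c τ) < mkey (eexp c 1) := by
  have h1 : StrictMono fun k => (c k).1 := fun k l h => (hc k l h).1
  have h2 : StrictMono fun k => (c k).2 := fun k l h => (hc k l h).2
  refine lt_of_le_of_ne ?_ ?_
  · refine lkey_max _ _ ?_ ?_ ?_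
    · intro i; rw [eexp_row, eexp_row]
    · intro j; rw [eexp_col, eexp_col]
    · intro i j i' j' h h' hi
      rw [eexp_ne_zero] at h h'
      obtain ⟨k, rfl, rfl⟩ := h
      obtain ⟨l, rfl, rfl⟩ := h'
      have : k < l := h1.lt_iff_lt.1 hi
      exact not_lt.2 (h2.lt_iff_lt.2 this).le
  · intro h
    have he := mkey_inj h
    apply hτ
    ext1 k
    have : eexp c 1 ((c (τ k)).1, (c k).2) ≠ 0 := by
      rw [← he, eexp_ne_zero]; exact ⟨k, rfl, rfl⟩
    rw [eexp_ne_zero] at this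
    obtain ⟨l, hl1, hl2⟩ := this
    have e1 : l = τ k := h1.injective hl1
    have e2 : l = k := h2.injective hl2
    rw [← e1, e2]; rfl

lemma gminor_eq {m : ℕ} (c : Fin m → ι × ι) :
    gminor m (fun k => (c k).1) (fun k => (c k).2) =
      ∑ τ : Equiv.Perm (Fin m), (Equiv.Perm.sign τ : ℤ) • monomial (eexp c τ) (1 : ℚ) := by
  rw [gminor, Matrix.det_apply]
  refine Finset.sum_congr rfl fun τ _ => ?_
  rw [Units.smul_def]
  congr 1
  rw [eexp, MvPolynomial.monomial_sum_one]
  rfl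

lemma good_span [LinearOrder ι] [Fintype ι] (m : ι × ι →₀ ℕ) :
    ∃ G : MvPolynomial (ι × ι) ℚ, monomial m 1 - G ∈ gideal ι n ∧
      ∀ m' ∈ G.support, IsGood n m' := by
  have wf : WellFounded (InvImage (fun a b : Lex ((ι ×ₗ ι) → ℕ) => a < b) (mkey (ι := ι))) :=
    InvImage.wf _ wellFounded_lt
  induction m using wf.induction with
  | _ m ih =>
  by_cases hg : IsGood n m
  · refine ⟨monomial m 1, by simp, ?_⟩
    intro m' hm'
    rw [MvPolynomial.support_monomial] at hm'
    simp at hm'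
    rw [hm']; exact hg
  · rw [IsGood, not_not] at hg
    obtain ⟨c, hc, hch⟩ := hg
    have h1 : StrictMono fun k => (c k).1 := fun k l h => (hch k l h).1
    have hle : eexp c 1 ≤ m := by
      intro ⟨i, j⟩
      by_cases h0 : eexp c 1 (i, j) = 0
      · rw [h0]; exact Nat.zero_le _
      · have h0' := h0
        rw [← Ne, eexp_ne_zero] at h0'
        obtain ⟨k, rfl, rfl⟩ := h0'
        have hk : m (c k) ≠ 0 := hc k
        have : eexp c 1 ((c ((1 : Equiv.Perm (Fin (n+1))) k)).1, (c k).2) = 1 := by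
          rw [eexp_apply, Finset.sum_eq_single k]
          · simp
          · intro l _ hl
            rw [if_neg]
            rintro ⟨h, -⟩
            exact hl (h1.injective h)
          · simp
        rw [this]
        exact Nat.one_le_iff_ne_zero.2 hk
    have hlt : ∀ τ : Equiv.Perm (Fin (n+1)), τ ≠ 1 → mkey (m - eexp c 1 + eexp c τ) < mkey m := by
      intro τ hτ
      conv_rhs => rw [← tsub_add_cancel_of_le hle]
      rw [mkey_add, mkey_add]
      exact add_lt_add_right (eexp_lt c hch τ hτ) _
    have hex : ∀ τ : Equiv.Perm (Fin (n+1)), ∃ G : MvPolynomial (ι × ι) ℚ,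
        τ ≠ 1 → (monomial (m - eexp c 1 + eexp c τ) 1 - G ∈ gideal ι n ∧
          ∀ m' ∈ G.support, IsGood n m') := by
      intro τ
      by_cases hτ : τ = 1
      · exact ⟨0, fun h => absurd hτ h⟩
      · obtain ⟨G, hG⟩ := ih _ (hlt τ hτ)
        exact ⟨G, fun _ => hG⟩
    choose G hG using hex
    refine ⟨- ∑ τ ∈ Finset.univ.erase 1, (Equiv.Perm.sign τ : ℤ) • G τ, ?_, ?_⟩
    · have hm : monomial (m - eexp c 1) (1:ℚ) * gminor (n+1) (fun k => (c k).1) (fun k => (c k).2)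
          ∈ gideal ι n := Ideal.mul_mem_left _ _ (Ideal.subset_span ⟨_, _, rfl⟩)
      rw [gminor_eq, Finset.mul_sum, ← Finset.add_sum_erase _ _ (Finset.mem_univ 1)] at hm
      have hs : ∑ τ ∈ Finset.univ.erase 1, (Equiv.Perm.sign τ : ℤ) •
          (monomial (m - eexp c 1 + eexp c τ) (1:ℚ) - G τ) ∈ gideal ι n := by
        refine Ideal.sum_mem _ fun τ hτ => ?_
        exact zsmul_mem (hG τ (Finset.ne_of_mem_erase hτ)).1 _
      have := Ideal.sub_mem _ hm hs
      convert this using 1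
      simp only [smul_sub, Finset.sum_sub_distrib, mul_smul_comm, MvPolynomial.monomial_mul, mul_one,
        Equiv.Perm.sign_one, tsub_add_cancel_of_le hle]
      simp
      ring
    · intro m' hm'
      rw [MvPolynomial.mem_support_iff] at hm'
      by_contra hb
      apply hm'
      rw [MvPolynomial.coeff_neg, MvPolynomial.coeff_sum, Finset.sum_eq_zero, neg_zero]
      intro τ hτ
      have : coeff m' (G τ) = 0 := by
        by_contra h0
        exact hb ((hG τ (Finset.ne_of_mem_erase hτ)).2 m' (MvPolynomial.mem_support_iff.2 h0))
      rw [MvPolynomial.coeff_smul, this, smul_zero]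

lemma good_span' [LinearOrder ι] [Fintype ι] (F : MvPolynomial (ι × ι) ℚ) :
    ∃ G : MvPolynomial (ι × ι) ℚ, F - G ∈ gideal ι n ∧
      ∀ m' ∈ G.support, IsGood n m' := by
  induction F using MvPolynomial.induction_on' with
  | monomial m a =>
    obtain ⟨G, h1, h2⟩ := good_span (ι := ι) n m
    refine ⟨C a * G, ?_, ?_⟩
    · have := Ideal.mul_mem_left _ (C a) h1
      convert this using 1
      rw [mul_sub, C_mul_monomial, mul_one]
    · intro m' hm'
      apply h2
      rw [MvPolynomial.mem_support_iff] at hm' ⊢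
      intro h; apply hm'
      rw [coeff_C_mul, h, mul_zero]
  | add p q ih ih' =>
    obtain ⟨G, h1, h2⟩ := ih
    obtain ⟨G', h1', h2'⟩ := ih'
    refine ⟨G + G', ?_, ?_⟩
    · have := Ideal.add_mem _ h1 h1'
      convert this using 1
      ring
    · intro m' hm'
      rcases Finset.mem_union.1 (MvPolynomial.support_add hm') with h | h
      · exact h2 _ h
      · exact h2' _ h


/-- margins relation -/
def Marg [Fintype ι] (M : Fin n → ι → ι → ℕ) (w : VV ι n →₀ ℕ) : Prop :=
  (∀ i k, w (Sum.inl (i, k)) = ∑ j, M k i j) ∧ (∀ j k, w (Sum.inr (j, k)) = ∑ i, M k i j)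

lemma pair_eq (i j : ι) : pair n i j = ∑ k : Fin n,
    monomial (Finsupp.single (Sum.inl (i, k)) 1 + Finsupp.single (Sum.inr (j, k)) 1) (1 : ℚ) := by
  simp [pair, X, monomial_mul]

lemma phi_add_single (m : ι × ι →₀ ℕ) (s : ι × ι) :
    phi n (monomial (m + Finsupp.single s 1) 1) = phi n (monomial m 1) * pair n s.1 s.2 := by
  have : monomial (m + Finsupp.single s 1) (1:ℚ) = monomial m 1 * X s := by
    simp [X, monomial_mul]
  rw [this, map_mul]
  simp [phi]

lemma expo_induction {σ : Type} {p : (σ →₀ ℕ) → Prop} (m : σ →₀ ℕ) (h0 : p 0)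
    (h1 : ∀ m s, p m → p (m + Finsupp.single s 1)) : p m := by
  induction m using Finsupp.induction with
  | zero => exact h0
  | single_add s k f _ _ hf =>
    rw [add_comm]
    clear * - h1 hf
    induction k with
    | zero => simpa using hf
    | succ k ih =>
      rw [Finsupp.single_add, ← add_assoc]
      exact h1 _ _ ih

lemma marg_add [Fintype ι] {M : Fin n → ι → ι → ℕ} {w : VV ι n →₀ ℕ} (h : Marg n M w)
    (s : ι × ι) (k : Fin n) :
    Marg n (fun k' i j => M k' i j + if k' = k ∧ i = s.1 ∧ j = s.2 then 1 else 0)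
      (w + (Finsupp.single (Sum.inl (s.1, k)) 1 + Finsupp.single (Sum.inr (s.2, k)) 1)) := by
  constructor
  · intro i k'
    have e : ∑ j, (if k' = k ∧ i = s.1 ∧ j = s.2 then 1 else 0) =
        if k' = k ∧ i = s.1 then 1 else 0 := by
      by_cases h3 : k' = k ∧ i = s.1
      · simp [h3.1, h3.2]
      · rw [if_neg h3]
        exact Finset.sum_eq_zero fun j _ => if_neg fun h4 => h3 ⟨h4.1, h4.2.1⟩
    simp only [Finsupp.add_apply, h.1, Finset.sum_add_distrib, Finsupp.single_apply, e]
    by_cases h1 : k = k' <;> by_cases h2 : s.1 = i <;> simp [h1, h2, eq_comm]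
  · intro i k'
    have e : ∑ j, (if k' = k ∧ j = s.1 ∧ i = s.2 then 1 else 0) =
        if k' = k ∧ i = s.2 then 1 else 0 := by
      by_cases h3 : k' = k ∧ i = s.2
      · simp [h3.1, h3.2]
      · rw [if_neg h3]
        exact Finset.sum_eq_zero fun j _ => if_neg fun h4 => h3 ⟨h4.1, h4.2.2⟩
    simp only [Finsupp.add_apply, h.2, Finset.sum_add_distrib, Finsupp.single_apply, e]
    by_cases h1 : k = k' <;> by_cases h2 : s.2 = i <;> simp [h1, h2, eq_comm]

lemma phi_supp [Fintype ι] (m : ι × ι →₀ ℕ) : ∀ w, coeff w (phi n (monomial m 1)) ≠ 0 →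
    ∃ M : Fin n → ι → ι → ℕ, (∀ i j, ∑ k, M k i j = m (i, j)) ∧ Marg n M w := by
  induction m using expo_induction with
  | h0 =>
    intro w hw
    have : w = 0 := by
      by_contra h
      apply hw
      have : (monomial (0 : ι × ι →₀ ℕ) (1:ℚ)) = 1 := rfl
      rw [this, map_one, coeff_one, if_neg (Ne.symm h)]
    subst this
    exact ⟨fun _ _ _ => 0, by simp, by simp, by simp⟩
  | h1 m s ih =>
    intro w hw
    rw [phi_add_single, pair_eq, Finset.mul_sum, coeff_sum] at hw
    obtain ⟨k, -, hk⟩ := Finset.exists_ne_zero_of_sum_ne_zero hw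
    rw [coeff_mul_monomial'] at hk
    split_ifs at hk with hle
    · rw [mul_one] at hk
      obtain ⟨M, h1, h2⟩ := ih _ hk
      refine ⟨fun k' i j => M k' i j + if k' = k ∧ i = s.1 ∧ j = s.2 then 1 else 0, ?_, ?_⟩
      rotate_left
      · have := marg_add n h2 s k
        rw [tsub_add_cancel_of_le hle] at this
        exact this
      · intro i j
        simp only [Finset.sum_add_distrib, h1, Finsupp.add_apply, Finsupp.single_apply]
        congr 1
        by_cases h3 : s = (i, j)
        · subst h3; simp
        · rw [if_neg h3, Finset.sum_eq_zero]
          intro k' _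
          rw [if_neg]
          rintro ⟨-, rfl, rfl⟩
          exact h3 rfl
    · exact absurd rfl hk

/-- nonnegative coefficients -/
def NNc {σ : Type} (f : MvPolynomial σ ℚ) : Prop := ∀ w, 0 ≤ coeff w f

lemma NNc.add {σ : Type} {f g : MvPolynomial σ ℚ} (hf : NNc f) (hg : NNc g) : NNc (f + g) :=
  fun w => by rw [coeff_add]; exact add_nonneg (hf w) (hg w)

lemma NNc.mul {σ : Type} {f g : MvPolynomial σ ℚ} (hf : NNc f) (hg : NNc g) : NNc (f * g) :=
  fun w => by rw [coeff_mul]; exact Finset.sum_nonneg fun a _ => mul_nonneg (hf _) (hg _)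

lemma NNc.mon {σ : Type} (m : σ →₀ ℕ) : NNc (monomial m (1:ℚ)) :=
  fun w => by rw [coeff_monomial]; split_ifs <;> norm_num

lemma NNc.sum {σ τ : Type} (s : Finset τ) (f : τ → MvPolynomial σ ℚ) (h : ∀ i, NNc (f i)) :
    NNc (∑ i ∈ s, f i) :=
  fun w => by rw [coeff_sum]; exact Finset.sum_nonneg fun a _ => h a w

lemma phi_lead [Fintype ι] (h : ι × ι → Fin n) (m : ι × ι →₀ ℕ) :
    ∃ w g, Marg n (fun k i j => if h (i, j) = k then m (i, j) else 0) w ∧ NNc g ∧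
      phi n (monomial m 1) = monomial w 1 + g := by
  induction m using expo_induction with
  | h0 =>
    refine ⟨0, 0, ⟨by simp, by simp⟩, fun w => by simp, ?_⟩
    have : (monomial (0 : ι × ι →₀ ℕ) (1:ℚ)) = 1 := rfl
    rw [this, map_one, add_zero]; rfl
  | h1 m s ih =>
    obtain ⟨w, g, h1, h2, h3⟩ := ih
    have hp := pair_eq n s.1 s.2
    rw [← Finset.add_sum_erase _ _ (Finset.mem_univ (h s))] at hp
    refine ⟨w + (Finsupp.single (Sum.inl (s.1, h s)) 1 + Finsupp.single (Sum.inr (s.2, h s)) 1),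
      monomial w 1 * (∑ k ∈ Finset.univ.erase (h s),
        monomial (Finsupp.single (Sum.inl (s.1, k)) 1 + Finsupp.single (Sum.inr (s.2, k)) 1) (1 : ℚ))
        + g * pair n s.1 s.2, ?_, ?_, ?_⟩
    · convert marg_add n h1 s (h s) using 1
      funext k i j
      simp only [Finsupp.add_apply, Finsupp.single_apply]
      by_cases hs : s = (i, j)
      · subst hs
        by_cases hk : h (i, j) = k
        · simp [hk]
        · simp [hk]; exact fun a => absurd a.symm hk
      · have : ¬ (k = h s ∧ i = s.1 ∧ j = s.2) := by
          rintro ⟨-, rfl, rfl⟩; exact hs rfl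
        simp [hs, this]
    · refine NNc.add (NNc.mul (NNc.mon _) (NNc.sum _ _ fun k => NNc.mon _)) (NNc.mul h2 ?_)
      rw [pair_eq]
      exact NNc.sum _ _ fun k => NNc.mon _
    · rw [phi_add_single, h3, add_mul, ← add_assoc]
      congr 1
      rw [hp, mul_add, monomial_mul, mul_one]

lemma good_indep [LinearOrder ι] [Fintype ι] (hn : 0 < n) (G : MvPolynomial (ι × ι) ℚ)
    (hG : ∀ m ∈ G.support, IsGood n m) (h0 : phi n G = 0) : G = 0 := by
  by_contra hne
  have hsup : G.support.Nonempty := by rwa [MvPolynomial.support_nonempty]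
  obtain ⟨m, hm, hmax⟩ := Finset.exists_max_image G.support mkey hsup
  obtain ⟨h, hh1, hh2⟩ := chain_colour (fun s s' : ι × ι => s.1 < s'.1 ∧ s.2 < s'.2)
    (fun a b c h h' => ⟨h.1.trans h'.1, h.2.trans h'.2⟩) n {s | m s ≠ 0} (hG m hm)
  -- a colouring with values in `Fin n`
  have hcol : ∃ h' : ι × ι → Fin n, ∀ s, m s ≠ 0 → ∀ s', m s' ≠ 0 →
      (s.1 < s'.1 ∧ s.2 < s'.2) → h' s ≠ h' s' := by
    refine ⟨fun s => if hs : h s < n then ⟨h s, hs⟩ else ⟨0, hn⟩, ?_⟩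
    intro s hs s' hs' hr
    have := hh2 s hs s' hs' hr
    simp only [hh1 s hs, hh1 s' hs', dif_pos, Ne, Fin.mk.injEq]
    omega
  obtain ⟨h', hh'⟩ := hcol
  obtain ⟨w, g, hw, hg, hwg⟩ := phi_lead n h' m
  have hcw : coeff w (phi n G) = coeff m G * coeff w (phi n (monomial m 1)) := by
    conv_lhs => rw [G.as_sum]
    rw [map_sum, coeff_sum, Finset.sum_eq_single m]
    · have : monomial m (coeff m G) = C (coeff m G) * monomial m 1 := by
        rw [C_mul_monomial, mul_one]
      rw [this, map_mul, ← algebraMap_eq, AlgHom.commutes, algebraMap_eq, coeff_C_mul]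
    · intro m' hm' hmm'
      have : monomial m' (coeff m' G) = C (coeff m' G) * monomial m' 1 := by
        rw [C_mul_monomial, mul_one]
      rw [this, map_mul, ← algebraMap_eq, AlgHom.commutes, algebraMap_eq, coeff_C_mul]
      by_contra hc
      have hc' := right_ne_zero_of_mul hc
      obtain ⟨M, hM1, hM2⟩ := phi_supp n m' w hc'
      have hk : ∀ k, lkey (fun i j => if h' (i, j) = k then m (i, j) else 0) ≤ lkey (M k) := by
        intro k
        apply lkey_min
        · intro i; rw [← hw.1 i k, hM2.1 i k]
        · intro j; rw [← hw.2 j k, hM2.2 j k]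
        · intro i j i' j' h1 h2 hi hj
          simp only [ne_eq, ite_eq_right_iff, not_forall] at h1 h2
          obtain ⟨e1, h1⟩ := h1
          obtain ⟨e2, h2⟩ := h2
          exact hh' _ h1 _ h2 ⟨hi, hj⟩ (e1.trans e2.symm)
      have hsum := Finset.sum_le_sum (s := Finset.univ) fun k _ => hk k
      have e1 : ∑ k, lkey (fun i j => if h' (i, j) = k then m (i, j) else 0) = mkey m := by
        funext s
        have : ∀ t : Finset (Fin n), (∑ k ∈ t, lkey (fun i j => if h' (i, j) = k then m (i, j) else 0)) s
          = ∑ k ∈ t, (if h' (ofLex s) = k then m (ofLex s) else 0) := fun t => Finset.sum_apply (M := fun _ => ℕ) _ _ _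
        rw [this]; simp; rfl
      have e2 : ∑ k, lkey (M k) = mkey m' := by
        funext s
        have : ∀ t : Finset (Fin n), (∑ k ∈ t, lkey (M k)) s
          = ∑ k ∈ t, M k (ofLex s).1 (ofLex s).2 := fun t => Finset.sum_apply (M := fun _ => ℕ) _ _ _
        rw [this, hM1]; rfl
      rw [e1, e2] at hsum
      exact hmm' (mkey_inj (le_antisymm (hmax m' hm') hsum))
    · intro h; exact absurd hm h
  rw [h0, coeff_zero, hwg, coeff_add, coeff_monomial, if_pos rfl] at hcw
  have h1 : coeff m G ≠ 0 := MvPolynomial.mem_support_iff.1 hm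
  have h2 := hg w
  rcases mul_eq_zero.1 hcw.symm with h | h
  · exact h1 h
  · linarith

theorem sft [LinearOrder ι] [Fintype ι] (hn : 0 < n) (F : MvPolynomial (ι × ι) ℚ) (h0 : phi n F = 0) :
    F ∈ gideal ι n := by
  obtain ⟨G, h1, h2⟩ := good_span' n F
  have h3 := phi_gideal n h1
  rw [map_sub, h0, zero_sub, neg_eq_zero] at h3
  rw [good_indep n hn G h2 h3, sub_zero] at h1
  exact h1

end SFT


section Fischer

lemma orth_decomp {V : Type} [AddCommGroup V] [Module ℚ V] (B : V →ₗ[ℚ] V →ₗ[ℚ] ℚ)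
    (hB : ∀ f, B f f = 0 → f = 0) (W : Submodule ℚ V) [FiniteDimensional ℚ W] (f : V) :
    ∃ w ∈ W, ∀ w' ∈ W, B w' (f - w) = 0 := by
  let T : W →ₗ[ℚ] Module.Dual ℚ W := (B.domRestrict₁₂ W W).flip
  have hinj : Function.Injective T := by
    rw [injective_iff_map_eq_zero]
    intro w hw
    have : T w w = 0 := by rw [hw]; rfl
    exact Subtype.ext (hB _ this)
  have hsurj : Function.Surjective T :=
    (LinearMap.injective_iff_surjective_of_finrank_eq_finrank
      (Subspace.dual_finrank_eq (K := ℚ) (V := W)).symm).1 hinj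
  obtain ⟨w, hw⟩ := hsurj ((B.flip f).comp W.subtype)
  refine ⟨w, w.2, fun w' hw' => ?_⟩
  have := LinearMap.congr_fun hw ⟨w', hw'⟩
  have h2 : B w' (w : V) = B w' f := this
  rw [map_sub, h2, sub_self]

variable {σ : Type} [Fintype σ]

/-- multi-factorial -/
def mfac (m : σ →₀ ℕ) : ℚ := ∏ v, ((m v).factorial : ℚ)

lemma mfac_pos (m : σ →₀ ℕ) : 0 < mfac m :=
  Finset.prod_pos fun v _ => by exact_mod_cast Nat.factorial_pos _

lemma mfac_add (m : σ →₀ ℕ) (v : σ) : mfac (m + Finsupp.single v 1) = mfac m * (m v + 1) := by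
  unfold mfac
  rw [← Finset.mul_prod_erase _ _ (Finset.mem_univ v),
    ← Finset.mul_prod_erase Finset.univ (fun u => ((m u).factorial : ℚ)) (Finset.mem_univ v)]
  have : ∏ x ∈ Finset.univ.erase v, (((m + Finsupp.single v 1 : σ →₀ ℕ) x).factorial : ℚ) =
      ∏ x ∈ Finset.univ.erase v, ((m x).factorial : ℚ) := by
    refine Finset.prod_congr rfl fun x hx => ?_
    have : v ≠ x := (Finset.ne_of_mem_erase hx).symm
    simp [Finsupp.single_apply, this]
  rw [this]
  simp [Nat.factorial_succ]
  ring

/-- The Fischer form -/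
def fisch : MvPolynomial σ ℚ →ₗ[ℚ] MvPolynomial σ ℚ →ₗ[ℚ] ℚ :=
  (basisMonomials σ ℚ).constr ℚ fun m => mfac m • lcoeff ℚ m

lemma fisch_monomial (m : σ →₀ ℕ) (g : MvPolynomial σ ℚ) :
    fisch (monomial m 1) g = mfac m * coeff m g := by
  have : monomial m (1:ℚ) = basisMonomials σ ℚ m := by simp
  rw [this, fisch, Module.Basis.constr_basis]
  simp [lcoeff]

lemma fisch_ext {T T' : MvPolynomial σ ℚ →ₗ[ℚ] ℚ} (h : ∀ m, T (monomial m 1) = T' (monomial m 1))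
    (f : MvPolynomial σ ℚ) : T f = T' f := by
  have : T = T' := (basisMonomials σ ℚ).ext fun m => by simpa using h m
  rw [this]

lemma fisch_X_mul (v : σ) (f g : MvPolynomial σ ℚ) : fisch (X v * f) g = fisch f (pderiv v g) := by
  refine fisch_ext (T := (fisch.flip g).comp (LinearMap.mulLeft ℚ (X v)))
    (T' := fisch.flip (pderiv v g)) ?_ f
  intro m
  have : X v * monomial m (1:ℚ) = monomial (m + Finsupp.single v 1) 1 := by
    simp [X, monomial_mul, add_comm]
  simp only [LinearMap.comp_apply, LinearMap.mulLeft_apply, LinearMap.flip_apply, this,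
    fisch_monomial, coeff_pderiv, mfac_add]
  ring

lemma fisch_eq (f g : MvPolynomial σ ℚ) :
    fisch f g = ∑ m ∈ f.support, coeff m f * (mfac m * coeff m g) := by
  conv_lhs => rw [f.as_sum]
  rw [map_sum, LinearMap.sum_apply]
  refine Finset.sum_congr rfl fun m _ => ?_
  have : monomial m (coeff m f) = coeff m f • monomial m (1:ℚ) := by simp [smul_monomial]
  rw [this, map_smul, LinearMap.smul_apply, fisch_monomial, smul_eq_mul]

lemma fisch_self (f : MvPolynomial σ ℚ) (h : fisch f f = 0) : f = 0 := by
  rw [fisch_eq, Finset.sum_eq_zero_iff_of_nonneg] at h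
  · by_contra hne
    obtain ⟨m, hm⟩ := (MvPolynomial.support_nonempty (p := f)).2 hne
    have h1 := h m hm
    have h2 := MvPolynomial.mem_support_iff.1 hm
    have h3 := mfac_pos m
    have : coeff m f * (mfac m * coeff m f) ≠ 0 := by positivity
    exact this h1
  · intro m _
    have h3 := mfac_pos m
    have : coeff m f * (mfac m * coeff m f) = mfac m * (coeff m f * coeff m f) := by ring
    rw [this]
    exact mul_nonneg h3.le (mul_self_nonneg _)

variable {ι : Type} (n : ℕ)

/-- the ideal generated by the `a_i · b_i` -/
def qideal (ι : Type) (n : ℕ) : Ideal (MvPolynomial (VV ι n) ℚ) :=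
  Ideal.span (Set.range fun i : ι => pair n i i)

/-- adjoint of multiplication by `a_i · b_i`. -/
def DD (i : ι) (g : MvPolynomial (VV ι n) ℚ) : MvPolynomial (VV ι n) ℚ :=
  ∑ k : Fin n, pderiv (Sum.inl (i, k)) (pderiv (Sum.inr (i, k)) g)

lemma fisch_pair [Fintype ι] (i : ι) (f g : MvPolynomial (VV ι n) ℚ) :
    fisch (pair n i i * f) g = fisch f (DD n i g) := by
  rw [pair, DD, Finset.sum_mul, map_sum, LinearMap.sum_apply, map_sum]
  refine Finset.sum_congr rfl fun k _ => ?_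
  rw [mul_comm (X (Sum.inl (i, k))), mul_assoc, fisch_X_mul, fisch_X_mul]

lemma pderiv_inr_phi [Fintype ι] (j : ι) (k : Fin n) (F : MvPolynomial (ι × ι) ℚ) :
    pderiv (Sum.inr (j, k)) (phi n F) = ∑ l, X (Sum.inl (l, k)) * phi n (pderiv (l, j) F) := by
  induction F using MvPolynomial.induction_on with
  | C a =>
    have : phi n (C a : MvPolynomial (ι × ι) ℚ) = C a := by simp [phi]
    rw [this]; simp
  | add p q hp hq => simp [hp, hq, mul_add, Finset.sum_add_distrib]
  | mul_X p s hp =>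
    have h1 : phi n (X s : MvPolynomial (ι × ι) ℚ) = pair n s.1 s.2 := by simp [phi]
    have h2 : pderiv (Sum.inr (j, k)) (pair n s.1 s.2) =
        if s.2 = j then X (Sum.inl (s.1, k)) else 0 := by
      simp only [pair, map_sum, pderiv_mul, pderiv_X, Pi.single_apply]
      by_cases h : s.2 = j
      · simp [h, eq_comm]
      · simp [h, fun h' => h (Eq.symm h')]
    rw [map_mul, pderiv_mul, hp, h1, h2]
    simp only [pderiv_mul, map_add, map_mul, h1, mul_add, Finset.sum_add_distrib]
    congr 1
    · rw [Finset.sum_mul]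
      exact Finset.sum_congr rfl fun l _ => by ring
    · simp only [pderiv_X, Pi.single_apply]
      by_cases h : s.2 = j
      · rw [Finset.sum_eq_single s.1]
        · subst h; simp [mul_comm]
        · intro l _ hl
          rw [if_neg]
          · simp
          · rintro h'; apply hl; rw [h']
        · simp
      · rw [if_neg h, mul_zero, Finset.sum_eq_zero]
        intro l _
        rw [if_neg]
        · simp
        · rintro h'; apply h; rw [h']

lemma pderiv_inl_phi [Fintype ι] (j : ι) (k : Fin n) (F : MvPolynomial (ι × ι) ℚ) :
    pderiv (Sum.inl (j, k)) (phi n F) = ∑ l, X (Sum.inr (l, k)) * phi n (pderiv (j, l) F) := by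
  induction F using MvPolynomial.induction_on with
  | C a =>
    have : phi n (C a : MvPolynomial (ι × ι) ℚ) = C a := by simp [phi]
    rw [this]; simp
  | add p q hp hq => simp [hp, hq, mul_add, Finset.sum_add_distrib]
  | mul_X p s hp =>
    have h1 : phi n (X s : MvPolynomial (ι × ι) ℚ) = pair n s.1 s.2 := by simp [phi]
    have h2 : pderiv (Sum.inl (j, k)) (pair n s.1 s.2) =
        if s.1 = j then X (Sum.inr (s.2, k)) else 0 := by
      simp only [pair, map_sum, pderiv_mul, pderiv_X, Pi.single_apply]
      by_cases h : s.1 = j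
      · simp [h, eq_comm]
      · simp [h, fun h' => h (Eq.symm h')]
    rw [map_mul, pderiv_mul, hp, h1, h2]
    simp only [pderiv_mul, map_add, map_mul, h1, mul_add, Finset.sum_add_distrib]
    congr 1
    · rw [Finset.sum_mul]
      exact Finset.sum_congr rfl fun l _ => by ring
    · simp only [pderiv_X, Pi.single_apply]
      by_cases h : s.1 = j
      · rw [Finset.sum_eq_single s.2]
        · subst h; simp [mul_comm]
        · intro l _ hl
          rw [if_neg]
          · simp
          · rintro h'; apply hl; rw [h']
        · simp
      · rw [if_neg h, mul_zero, Finset.sum_eq_zero]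
        intro l _
        rw [if_neg]
        · simp
        · rintro h'; apply h; rw [h']

lemma DD_phi [Fintype ι] (i : ι) (F : MvPolynomial (ι × ι) ℚ) :
    ∃ H, DD n i (phi n F) = phi n H := by
  refine ⟨∑ k : Fin n, (pderiv (i, i) F) + ∑ l, ∑ m, X (l, m) * pderiv (i, m) (pderiv (l, i) F), ?_⟩
  have h1 : ∀ s : ι × ι, phi n (X s : MvPolynomial (ι × ι) ℚ) = pair n s.1 s.2 := by
    intro s; simp [phi]
  simp only [DD, pderiv_inr_phi, map_sum, pderiv_mul, pderiv_inl_phi, map_add, map_mul, h1,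
    Finset.sum_add_distrib]
  congr 1
  · refine Finset.sum_congr rfl fun k _ => ?_
    rw [Finset.sum_eq_single i]
    · simp [pderiv_X]
    · intro l _ hl
      rw [pderiv_X, Pi.single_apply, if_neg]
      · simp
      · rintro h'; apply hl; simpa using h'
    · simp
  · rw [Finset.sum_comm]
    refine Finset.sum_congr rfl fun l _ => ?_
    simp only [pair, Finset.mul_sum, Finset.sum_mul]
    rw [Finset.sum_comm]
    refine Finset.sum_congr rfl fun m _ => ?_
    refine Finset.sum_congr rfl fun k _ => ?_
    ring

/-- the ideal generated by the diagonal variables -/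
def dideal (ι : Type) : Ideal (MvPolynomial (ι × ι) ℚ) :=
  Ideal.span (Set.range fun i : ι => X (i, i))

lemma phi_dideal {H : MvPolynomial (ι × ι) ℚ} (hH : H ∈ dideal ι) : phi n H ∈ qideal ι n := by
  have : dideal ι ≤ (qideal ι n).comap (phi n) := by
    rw [dideal, Ideal.span_le]
    rintro _ ⟨i, rfl⟩
    simp only [SetLike.mem_coe, Ideal.mem_comap]
    have : phi n (X (i, i) : MvPolynomial (ι × ι) ℚ) = pair n i i := by simp [phi]
    rw [this]
    exact Ideal.subset_span ⟨i, rfl⟩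
  exact this hH

lemma DD_deg (d : ℕ) (i : ι) (g : MvPolynomial (VV ι n) ℚ) (hg : g.totalDegree ≤ d) :
    (pair n i i * DD n i g).totalDegree ≤ d := by
  have hc : ∀ m, coeff m (DD n i g) ≠ 0 → (m.sum fun _ e => e) + 2 ≤ d := by
    intro m hm
    rw [DD, coeff_sum] at hm
    obtain ⟨k, -, hk⟩ := Finset.exists_ne_zero_of_sum_ne_zero hm
    rw [coeff_pderiv, coeff_pderiv] at hk
    have h1 := left_ne_zero_of_mul (left_ne_zero_of_mul hk)
    have h2 := MvPolynomial.le_totalDegree (MvPolynomial.mem_support_iff.2 h1)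
    rw [Finsupp.sum_add_index' (by simp) (by simp), Finsupp.sum_add_index' (by simp) (by simp),
      Finsupp.sum_single_index rfl, Finsupp.sum_single_index rfl] at h2
    omega
  by_cases h0 : DD n i g = 0
  · rw [h0, mul_zero, totalDegree_zero]; exact Nat.zero_le _
  have hp : (pair n i i).totalDegree ≤ 2 := by
    unfold pair
    refine (totalDegree_finset_sum _ _).trans (Finset.sup_le fun k _ => ?_)
    refine (totalDegree_mul _ _).trans ?_
    rw [totalDegree_X, totalDegree_X]
  have hD : (DD n i g).totalDegree + 2 ≤ d := by
    obtain ⟨m, hm, hm'⟩ := Finset.exists_mem_eq_sup (DD n i g).support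
      (MvPolynomial.support_nonempty.2 h0) (fun s => s.sum fun _ e => e)
    have h3 : (DD n i g).totalDegree = m.sum fun _ e => e := hm'
    rw [h3]
    exact hc m (MvPolynomial.mem_support_iff.1 hm)
  have := totalDegree_mul (pair n i i) (DD n i g)
  omega

theorem reynolds [Fintype ι] (F : MvPolynomial (ι × ι) ℚ) (hF : phi n F ∈ qideal ι n) :
    ∃ H ∈ dideal ι, phi n F = phi n H := by
  set d := (phi n F).totalDegree with hd
  let W : Submodule ℚ (MvPolynomial (VV ι n) ℚ) :=
    ((dideal ι).restrictScalars ℚ).map (phi n).toLinearMap ⊓ restrictTotalDegree (VV ι n) ℚ d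
  haveI : FiniteDimensional ℚ W :=
    Submodule.finiteDimensional_of_le (inf_le_right :
      W ≤ restrictTotalDegree (VV ι n) ℚ d)
  obtain ⟨w, hw, horth⟩ := orth_decomp fisch fisch_self W (phi n F)
  obtain ⟨⟨H, hH, rfl⟩, hwd⟩ := hw
  have hH' : H ∈ dideal ι := hH
  refine ⟨H, hH', ?_⟩
  set g := phi n F - (phi n).toLinearMap H with hg
  have hgF : g = phi n (F - H) := by rw [map_sub]; rfl
  have hgd : g.totalDegree ≤ d := by
    rw [← mem_restrictTotalDegree]
    exact Submodule.sub_mem _ ((mem_restrictTotalDegree _ _ _).2 le_rfl) hwd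
  have hD : ∀ i, DD n i g = 0 := by
    intro i
    obtain ⟨H', hH'⟩ := DD_phi n i (F - H)
    apply fisch_self
    rw [← fisch_pair]
    apply horth
    refine ⟨⟨X (i, i) * H', ?_, ?_⟩, ?_⟩
    · exact Ideal.mul_mem_right _ _ (Ideal.subset_span ⟨i, rfl⟩)
    · rw [hgF, hH']
      simp [phi]
    · exact (mem_restrictTotalDegree _ _ _).2 (DD_deg n d i g hgd)
  have hgq : g ∈ qideal ι n := Ideal.sub_mem _ hF (phi_dideal n hH')
  have hz : ∀ f ∈ qideal ι n, fisch f g = 0 := by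
    intro f hf
    have key : ∀ c, fisch (c * f) g = 0 := by
      refine Submodule.span_induction (p := fun f _ => ∀ c, fisch (c * f) g = 0) ?_ ?_ ?_ ?_ hf
      · rintro _ ⟨i, rfl⟩ c
        rw [mul_comm, fisch_pair, hD, map_zero]
      · intro c; simp
      · intro x y _ _ hx hy c
        rw [mul_add, map_add, LinearMap.add_apply, hx, hy, add_zero]
      · intro a x _ hx c
        rw [smul_eq_mul, ← mul_assoc, hx]
    simpa using key 1
  have := fisch_self g (hz g hgq)
  rw [hg, sub_eq_zero] at this
  exact this

end Fischer


section QPrime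

variable {ι : Type} (m : ℕ)

/-- smaller polynomial ring -/
abbrev SS (ι : Type) (m : ℕ) : Type := MvPolynomial (VV ι m) ℚ

/-- the embedding forgetting coordinate zero -/
def semb : SS ι m →ₐ[ℚ] MvPolynomial (VV ι (m+1)) ℚ :=
  rename (Sum.map (Prod.map id Fin.succ) (Prod.map id Fin.succ))

lemma pair_semb (i : ι) : pair (m+1) i i =
    X (Sum.inl (i, 0)) * X (Sum.inr (i, 0)) + semb m (pair m i i) := by
  simp [pair, Fin.sum_univ_succ, semb]

/-- normal form factor -/
def tfac (i : ι) (z : ℤ) : MvPolynomial (VV ι (m+1)) ℚ :=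
  X (Sum.inl (i, 0)) ^ z.toNat * X (Sum.inr (i, 0)) ^ (-z).toNat

/-- normal form monomial -/
def tmon [Fintype ι] (e : ι → ℤ) : MvPolynomial (VV ι (m+1)) ℚ := ∏ i, tfac m i (e i)

lemma tmon_split [Fintype ι] (e : ι → ℤ) (i : ι) (z : ℤ) :
    tmon m (e + Pi.single i z) =
      tfac m i (e i + z) * ∏ j ∈ Finset.univ.erase i, tfac m j (e j) := by
  unfold tmon
  rw [← Finset.mul_prod_erase _ _ (Finset.mem_univ i)]
  congr 1
  · simp
  · refine Finset.prod_congr rfl fun j hj => ?_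
    have : j ≠ i := Finset.ne_of_mem_erase hj
    simp [Pi.single_apply, this]

lemma tmon_split0 [Fintype ι] (e : ι → ℤ) (i : ι) :
    tmon m e = tfac m i (e i) * ∏ j ∈ Finset.univ.erase i, tfac m j (e j) := by
  unfold tmon
  rw [← Finset.mul_prod_erase _ _ (Finset.mem_univ i)]

lemma tmon_up [Fintype ι] (e : ι → ℤ) (i : ι) (h : 0 ≤ e i) :
    tmon m (e + Pi.single i 1) = X (Sum.inl (i, 0)) * tmon m e := by
  rw [tmon_split, tmon_split0 m e i, ← mul_assoc]
  congr 1
  unfold tfac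
  have h1 : (e i + 1).toNat = (e i).toNat + 1 := by omega
  have h2 : (-(e i + 1)).toNat = 0 := by omega
  have h3 : (-(e i)).toNat = 0 := by omega
  rw [h1, h2, h3]; ring

lemma tmon_up' [Fintype ι] (e : ι → ℤ) (i : ι) (h : e i < 0) :
    tmon m e = X (Sum.inr (i, 0)) * tmon m (e + Pi.single i 1) := by
  rw [tmon_split, tmon_split0 m e i, ← mul_assoc]
  congr 1
  unfold tfac
  have h1 : (e i + 1).toNat = 0 := by omega
  have h2 : (e i).toNat = 0 := by omega
  have h3 : (-(e i)).toNat = (-(e i + 1)).toNat + 1 := by omega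
  rw [h1, h2, h3]; ring

lemma tmon_dn [Fintype ι] (e : ι → ℤ) (i : ι) (h : e i ≤ 0) :
    tmon m (e + Pi.single i (-1)) = X (Sum.inr (i, 0)) * tmon m e := by
  rw [tmon_split, tmon_split0 m e i, ← mul_assoc]
  congr 1
  unfold tfac
  have h1 : (e i + -1).toNat = 0 := by omega
  have h2 : (e i).toNat = 0 := by omega
  have h3 : (-(e i + -1)).toNat = (-(e i)).toNat + 1 := by omega
  rw [h1, h2, h3]; ring

lemma tmon_dn' [Fintype ι] (e : ι → ℤ) (i : ι) (h : 0 < e i) :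
    tmon m e = X (Sum.inl (i, 0)) * tmon m (e + Pi.single i (-1)) := by
  rw [tmon_split, tmon_split0 m e i, ← mul_assoc]
  congr 1
  unfold tfac
  have h1 : (e i).toNat = (e i + -1).toNat + 1 := by omega
  have h2 : (-(e i)).toNat = 0 := by omega
  have h3 : (-(e i + -1)).toNat = 0 := by omega
  rw [h1, h2, h3]; ring

lemma nf_step [Fintype ι] (v : VV ι (m+1)) (s : SS ι m) (e : ι → ℤ) :
    ∃ s' e', X v * (semb m s * tmon m e) - semb m s' * tmon m e' ∈ qideal ι (m+1) := by
  have hq : ∀ i : ι, pair (m+1) i i ∈ qideal ι (m+1) := fun i => Ideal.subset_span ⟨i, rfl⟩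
  rcases v with ⟨i, k⟩ | ⟨i, k⟩
  · refine Fin.cases ?_ (fun k => ?_) k
    · rcases le_or_gt 0 (e i) with h | h
      · refine ⟨s, e + Pi.single i 1, ?_⟩
        rw [tmon_up m e i h]
        convert Ideal.zero_mem _ using 1
        ring
      · refine ⟨-(pair m i i) * s, e + Pi.single i 1, ?_⟩
        rw [tmon_up' m e i h]
        convert Ideal.mul_mem_right (semb m s * tmon m (e + Pi.single i 1)) _ (hq i) using 1
        rw [pair_semb, map_mul, map_neg]
        ring
    · refine ⟨X (Sum.inl (i, k)) * s, e, ?_⟩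
      convert Ideal.zero_mem _ using 1
      rw [map_mul]
      simp [semb]
      ring
  · refine Fin.cases ?_ (fun k => ?_) k
    · rcases le_or_gt (e i) 0 with h | h
      · refine ⟨s, e + Pi.single i (-1), ?_⟩
        rw [tmon_dn m e i h]
        convert Ideal.zero_mem _ using 1
        ring
      · refine ⟨-(pair m i i) * s, e + Pi.single i (-1), ?_⟩
        rw [tmon_dn' m e i h]
        convert Ideal.mul_mem_right (semb m s * tmon m (e + Pi.single i (-1))) _ (hq i) using 1
        rw [pair_semb, map_mul, map_neg]
        ring
    · refine ⟨X (Sum.inr (i, k)) * s, e, ?_⟩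
      convert Ideal.zero_mem _ using 1
      rw [map_mul]
      simp [semb]
      ring

/-- evaluation of normal forms -/
def nfv [Fintype ι] (c : (ι → ℤ) →₀ SS ι m) : MvPolynomial (VV ι (m+1)) ℚ :=
  c.sum fun e s => semb m s * tmon m e

lemma nfv_add [Fintype ι] (c c' : (ι → ℤ) →₀ SS ι m) : nfv m (c + c') = nfv m c + nfv m c' :=
  Finsupp.sum_add_index' (by simp) (by intros; rw [map_add, add_mul])

lemma nfv_single [Fintype ι] (e : ι → ℤ) (s : SS ι m) :
    nfv m (Finsupp.single e s) = semb m s * tmon m e :=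
  Finsupp.sum_single_index (by simp)

lemma nf_X [Fintype ι] (v : VV ι (m+1)) (c : (ι → ℤ) →₀ SS ι m) :
    ∃ c', X v * nfv m c - nfv m c' ∈ qideal ι (m+1) := by
  induction c using Finsupp.induction_linear with
  | zero => exact ⟨0, by simp [nfv]⟩
  | add c c' h h' =>
    obtain ⟨d, hd⟩ := h
    obtain ⟨d', hd'⟩ := h'
    refine ⟨d + d', ?_⟩
    rw [nfv_add, nfv_add]
    convert Ideal.add_mem _ hd hd' using 1
    ring
  | single e s =>
    obtain ⟨s', e', h⟩ := nf_step m v s e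
    exact ⟨Finsupp.single e' s', by rw [nfv_single, nfv_single]; exact h⟩

lemma nf_all [Fintype ι] (f : MvPolynomial (VV ι (m+1)) ℚ) :
    ∃ c, f - nfv m c ∈ qideal ι (m+1) := by
  induction f using MvPolynomial.induction_on with
  | C a =>
    refine ⟨Finsupp.single 0 (C a), ?_⟩
    rw [nfv_single]
    simp [semb, tmon, tfac]
  | add p q hp hq =>
    obtain ⟨d, hd⟩ := hp
    obtain ⟨d', hd'⟩ := hq
    refine ⟨d + d', ?_⟩
    rw [nfv_add]
    convert Ideal.add_mem _ hd hd' using 1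
    ring
  | mul_X p v hp =>
    obtain ⟨d, hd⟩ := hp
    obtain ⟨d', hd'⟩ := nf_X m v d
    refine ⟨d', ?_⟩
    convert Ideal.add_mem _ (Ideal.mul_mem_right (X v) _ hd) hd' using 1
    ring

/-- parametrization -/
def theta (ι : Type) (m : ℕ) :
    MvPolynomial (VV ι (m+1)) ℚ →ₐ[ℚ] AddMonoidAlgebra (SS ι m) (ι → ℤ) :=
  aeval (Sum.elim
    (fun s => Fin.cases (AddMonoidAlgebra.single (Pi.single s.1 1) 1)
      (fun k => AddMonoidAlgebra.single 0 (X (Sum.inl (s.1, k)))) s.2)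
    (fun s => Fin.cases (AddMonoidAlgebra.single (Pi.single s.1 (-1)) (-(pair m s.1 s.1)))
      (fun k => AddMonoidAlgebra.single 0 (X (Sum.inr (s.1, k)))) s.2))

lemma theta_semb (s : SS ι m) : theta ι m (semb m s) = AddMonoidAlgebra.single 0 s := by
  have : (theta ι m).comp (semb m) = AddMonoidAlgebra.singleZeroAlgHom := by
    apply MvPolynomial.algHom_ext
    rintro (⟨i, k⟩ | ⟨i, k⟩) <;> simp [theta, semb]
  exact DFunLike.congr_fun this s

lemma theta_pair (i : ι) : theta ι m (pair (m+1) i i) = 0 := by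
  rw [pair_semb, map_add, map_mul, theta_semb]
  simp only [theta, aeval_X, Sum.elim_inl, Sum.elim_inr, Fin.cases_zero,
    AddMonoidAlgebra.single_mul_single]
  rw [← Pi.single_add]
  simp [← AddMonoidAlgebra.single_add]

lemma theta_qideal {f : MvPolynomial (VV ι (m+1)) ℚ} (hf : f ∈ qideal ι (m+1)) :
    theta ι m f = 0 := by
  have : qideal ι (m+1) ≤ RingHom.ker (theta ι m) := by
    rw [qideal, Ideal.span_le]
    rintro _ ⟨i, rfl⟩
    exact theta_pair m i
  exact this hf

lemma pair_self_ne (hm : 0 < m) (i : ι) : pair m i i ≠ 0 := by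
  intro h
  have := congrArg (eval fun _ => (1:ℚ)) h
  simp [pair] at this
  omega

lemma theta_tmon [Fintype ι] (hm : 0 < m) (e : ι → ℤ) :
    ∃ u : SS ι m, u ≠ 0 ∧ theta ι m (tmon m e) = AddMonoidAlgebra.single e u := by
  refine ⟨∏ i, (-(pair m i i)) ^ (-(e i)).toNat, ?_, ?_⟩
  · exact Finset.prod_ne_zero_iff.2 fun i _ => pow_ne_zero _ (neg_ne_zero.2 (pair_self_ne m hm i))
  · rw [tmon, map_prod]
    have : ∀ i, theta ι m (tfac m i (e i)) =
        AddMonoidAlgebra.single (Pi.single i (e i)) ((-(pair m i i)) ^ (-(e i)).toNat) := by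
      intro i
      simp only [tfac, theta, map_mul, map_pow, aeval_X, Sum.elim_inl, Sum.elim_inr,
        Fin.cases_zero, AddMonoidAlgebra.single_pow, AddMonoidAlgebra.single_mul_single, one_pow,
        one_mul]
      congr 1
      rw [← Pi.single_smul, ← Pi.single_smul, ← Pi.single_add]
      congr 1
      simp
      omega
    simp only [this]
    rw [AddMonoidAlgebra.prod_single, Finset.univ_sum_single]

lemma theta_ker [Fintype ι] (hm : 0 < m) {f : MvPolynomial (VV ι (m+1)) ℚ}
    (h : theta ι m f = 0) : f ∈ qideal ι (m+1) := by
  obtain ⟨c, hc⟩ := nf_all m f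
  have h1 := theta_qideal m hc
  rw [map_sub, h, zero_sub, neg_eq_zero] at h1
  choose u hu hu' using theta_tmon (ι := ι) m hm
  have h2 : ∀ e, c e * u e = 0 := by
    intro e
    have h3 := congrArg (fun g => AddMonoidAlgebra.coeff g e) h1
    simp only [nfv, Finsupp.sum, map_sum, map_mul, theta_semb, hu',
      AddMonoidAlgebra.single_mul_single, zero_add] at h3
    rw [AddMonoidAlgebra.coeff_sum] at h3
    simp only [AddMonoidAlgebra.coeff_single, Finsupp.coe_finset_sum, Finset.sum_apply,
      Finsupp.single_apply] at h3
    by_cases h0 : c e = 0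
    · rw [h0, zero_mul]
    · simpa [h0] using h3
  have h4 : c = 0 := by
    ext1 e
    exact (mul_eq_zero.1 (h2 e)).resolve_right (hu e)
  subst h4
  simpa [nfv] using hc

theorem qideal_prime [Fintype ι] (n : ℕ) (hn : 2 ≤ n) {f g : MvPolynomial (VV ι n) ℚ}
    (h : f * g ∈ qideal ι n) : f ∈ qideal ι n ∨ g ∈ qideal ι n := by
  obtain ⟨m, rfl⟩ : ∃ m, n = m + 1 := ⟨n - 1, by omega⟩
  have hm : 0 < m := by omega
  have := theta_qideal m h
  rw [map_mul, mul_eq_zero] at this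
  exact this.imp (theta_ker m hm) (theta_ker m hm)

end QPrime


section FinCase

/-- generic index type -/
abbrev GIdx (ι : Type) : Type := {q : ι × ι // q.1 ≠ q.2}

/-- generic generator -/
def ggen (K : Type) [Field K] (ι : Type) (x y : ι) : MvPolynomial (GIdx ι) K :=
  if h : x ≠ y then X (⟨(x, y), h⟩ : GIdx ι) else 0

/-- generic determinant -/
def gD (K : Type) [Field K] (ι : Type) (m : ℕ) (xs ys : Fin m → ι) : MvPolynomial (GIdx ι) K :=
  Matrix.det (Matrix.of fun i j => ggen K ι (xs i) (ys j))

/-- generic ideal -/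
def gR (K : Type) [Field K] (ι : Type) (n : ℕ) : Ideal (MvPolynomial (GIdx ι) K) :=
  Ideal.span {D | ∃ xs ys : Fin (n+1) → ι, D = gD K ι (n+1) xs ys}

/-- first property -/
def Good1 (K : Type) [Field K] (ι : Type) (n : ℕ) : Prop :=
  ∀ xs ys : Fin n → ι, Function.Injective xs → Function.Injective ys →
    ∀ F, gD K ι n xs ys * F ∈ gR K ι n → F ∈ gR K ι n

/-- second property -/
def Good2 (K : Type) [Field K] (ι : Type) (n : ℕ) : Prop :=
  ∀ r r' c c' : Fin n → ι,
    gD K ι n r c * gD K ι n r' c' - gD K ι n r c' * gD K ι n r' c ∈ gR K ι n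

variable {ι : Type} (n : ℕ)

lemma gD_map {K L : Type} [Field K] [CommRing L] {m : ℕ} (f : MvPolynomial (GIdx ι) K →+* L)
    (xs ys : Fin m → ι) :
    f (gD K ι m xs ys) = Matrix.det (Matrix.of fun i j => f (ggen K ι (xs i) (ys j))) := by
  rw [gD, RingHom.map_det]
  rfl

/-- map to vectors -/
def psi (ι : Type) (n : ℕ) : MvPolynomial (GIdx ι) ℚ →ₐ[ℚ] MvPolynomial (VV ι n) ℚ :=
  aeval fun q => pair n q.1.1 q.1.2

lemma psi_ggen (x y : ι) :
    Ideal.Quotient.mk (qideal ι n) (psi ι n (ggen ℚ ι x y)) =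
      Ideal.Quotient.mk (qideal ι n) (pair n x y) := by
  by_cases h : x ≠ y
  · rw [ggen, dif_pos h]; simp [psi]
  · rw [ggen, dif_neg h, map_zero, map_zero]
    push Not at h
    subst h
    exact (Ideal.Quotient.eq_zero_iff_mem.2
      (show pair n x x ∈ qideal ι n from Ideal.subset_span ⟨x, rfl⟩)).symm

lemma psi_gD (m : ℕ) (xs ys : Fin m → ι) :
    Ideal.Quotient.mk (qideal ι n) (psi ι n (gD ℚ ι m xs ys)) =
      Ideal.Quotient.mk (qideal ι n)
        (Matrix.det (Matrix.of fun i j => pair n (xs i) (ys j))) := by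
  have h := gD_map ((Ideal.Quotient.mk (qideal ι n)).comp (psi ι n).toRingHom) xs ys
  have h2 : ∀ x y, ((Ideal.Quotient.mk (qideal ι n)).comp (psi ι n).toRingHom) (ggen ℚ ι x y) =
      Ideal.Quotient.mk (qideal ι n) (pair n x y) := psi_ggen n
  simp only [h2] at h
  rw [RingHom.map_det]
  exact h

/-- determinant of vectors -/
def detA (xs : Fin n → ι) : MvPolynomial (VV ι n) ℚ :=
  Matrix.det (Matrix.of fun i k => X (Sum.inl (xs i, k)))

/-- determinant of covectors -/
def detB (ys : Fin n → ι) : MvPolynomial (VV ι n) ℚ :=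
  Matrix.det (Matrix.of fun k j => X (Sum.inr (ys j, k)))

lemma psi_gD' (xs ys : Fin n → ι) :
    Ideal.Quotient.mk (qideal ι n) (psi ι n (gD ℚ ι n xs ys)) =
      Ideal.Quotient.mk (qideal ι n) (detA n xs * detB n ys) := by
  rw [psi_gD, det_pair, Matrix.det_mul]; rfl

lemma psi_gR {F : MvPolynomial (GIdx ι) ℚ} (hF : F ∈ gR ℚ ι n) : psi ι n F ∈ qideal ι n := by
  have : gR ℚ ι n ≤ (qideal ι n).comap (psi ι n) := by
    rw [gR, Ideal.span_le]
    rintro _ ⟨xs, ys, rfl⟩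
    simp only [SetLike.mem_coe, Ideal.mem_comap]
    rw [← Ideal.Quotient.eq_zero_iff_mem, psi_gD, det_pair_succ, map_zero]
  exact this hF

/-- the projection -/
def gproj (ι : Type) : MvPolynomial (ι × ι) ℚ →ₐ[ℚ] MvPolynomial (GIdx ι) ℚ :=
  aeval fun s => ggen ℚ ι s.1 s.2

lemma gproj_gideal {F : MvPolynomial (ι × ι) ℚ} (hF : F ∈ gideal ι n) : gproj ι F ∈ gR ℚ ι n := by
  have : gideal ι n ≤ (gR ℚ ι n).comap (gproj ι) := by
    rw [gideal, Ideal.span_le]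
    rintro _ ⟨xs, ys, rfl⟩
    simp only [SetLike.mem_coe, Ideal.mem_comap]
    refine Ideal.subset_span ⟨xs, ys, ?_⟩
    rw [gminor, AlgHom.map_det, gD]
    congr 1
    ext1 i j
    simp [gproj]
  exact this hF

lemma gproj_dideal {F : MvPolynomial (ι × ι) ℚ} (hF : F ∈ dideal ι) : gproj ι F = 0 := by
  have : dideal ι ≤ RingHom.ker (gproj ι) := by
    rw [dideal, Ideal.span_le]
    rintro _ ⟨i, rfl⟩
    simp [gproj, ggen, RingHom.mem_ker]
  exact this hF

lemma gR_of_psi [LinearOrder ι] [Fintype ι] (hn : 0 < n) {F : MvPolynomial (GIdx ι) ℚ}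
    (hF : psi ι n F ∈ qideal ι n) : F ∈ gR ℚ ι n := by
  set G : MvPolynomial (ι × ι) ℚ := rename Subtype.val F with hG
  have h1 : phi n G = psi ι n F := by
    rw [hG, phi, aeval_rename]; rfl
  have h2 : gproj ι G = F := by
    rw [hG, gproj, aeval_rename]
    have : (fun s : ι × ι => ggen ℚ ι s.1 s.2) ∘ (Subtype.val : GIdx ι → ι × ι) = X := by
      funext q
      simp [ggen, q.2]
    rw [this, aeval_X_left]; rfl
  obtain ⟨H, hH, hH'⟩ := reynolds n G (h1 ▸ hF)
  have h3 := gproj_gideal n (sft n hn (G - H) (by rw [map_sub, hH', sub_self]))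
  rwa [map_sub, gproj_dideal hH, h2, sub_zero] at h3

lemma eval_detA (xs : Fin n → ι) (hx : Function.Injective xs) : detA n xs ∉ qideal ι n := by
  intro hmem
  let ev : MvPolynomial (VV ι n) ℚ →+* ℚ :=
    eval (Sum.elim (fun s => if s.1 = xs s.2 then 1 else 0) (fun _ => 0))
  have hq : qideal ι n ≤ RingHom.ker ev := by
    rw [qideal, Ideal.span_le]
    rintro _ ⟨i, rfl⟩
    simp [ev, pair, RingHom.mem_ker]
  have h0 : ev (detA n xs) = 0 := hq hmem
  have h1 : ev (detA n xs) = 1 := by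
    rw [detA, RingHom.map_det]
    convert Matrix.det_one (n := Fin n) (R := ℚ)
    ext1 i k
    simp [ev, Matrix.one_apply, hx.eq_iff]
  rw [h1] at h0
  exact one_ne_zero h0

lemma eval_detB (xs : Fin n → ι) (hx : Function.Injective xs) : detB n xs ∉ qideal ι n := by
  intro hmem
  let ev : MvPolynomial (VV ι n) ℚ →+* ℚ :=
    eval (Sum.elim (fun _ => 0) (fun s => if xs s.2 = s.1 then 1 else 0))
  have hq : qideal ι n ≤ RingHom.ker ev := by
    rw [qideal, Ideal.span_le]
    rintro _ ⟨i, rfl⟩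
    simp [ev, pair, RingHom.mem_ker]
  have h0 : ev (detB n xs) = 0 := hq hmem
  have h1 : ev (detB n xs) = 1 := by
    rw [detB, RingHom.map_det]
    convert Matrix.det_one (n := Fin n) (R := ℚ)
    ext1 i k
    simp [ev, Matrix.one_apply, hx.eq_iff]
  rw [h1] at h0
  exact one_ne_zero h0

theorem good1_fin [LinearOrder ι] [Fintype ι] (hn : 2 ≤ n) : Good1 ℚ ι n := by
  intro xs ys hx hy F hF
  have h := psi_gR n hF
  rw [← Ideal.Quotient.eq_zero_iff_mem, map_mul, map_mul, psi_gD', ← map_mul,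
    Ideal.Quotient.eq_zero_iff_mem] at h
  apply gR_of_psi n (by omega)
  rcases qideal_prime n hn h with h | h
  · rcases qideal_prime n hn h with h | h
    · exact absurd h (eval_detA n xs hx)
    · exact absurd h (eval_detB n ys hy)
  · exact h

theorem good2_fin [LinearOrder ι] [Fintype ι] (hn : 2 ≤ n) : Good2 ℚ ι n := by
  intro r r' c c'
  apply gR_of_psi n (by omega)
  rw [← Ideal.Quotient.eq_zero_iff_mem]
  simp only [map_sub, map_mul, psi_gD']
  ring

end FinCase


section Transfer

/-- coefficientwise application of a functional -/
def lcw {σ K : Type} [Field K] [Algebra ℚ K] (l : K →ₗ[ℚ] ℚ) (F : MvPolynomial σ K) :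
    MvPolynomial σ ℚ := ∑ m ∈ F.support, monomial m (l (coeff m F))

lemma coeff_lcw {σ K : Type} [Field K] [Algebra ℚ K] (l : K →ₗ[ℚ] ℚ) (F : MvPolynomial σ K)
    (m : σ →₀ ℕ) : coeff m (lcw l F) = l (coeff m F) := by
  rw [lcw, coeff_sum]
  simp only [coeff_monomial]
  rw [Finset.sum_ite_eq' F.support m (fun m => l (coeff m F))]
  split_ifs with h
  · rfl
  · rw [MvPolynomial.notMem_support_iff.1 h, map_zero]

lemma lcw_map_mul {σ K : Type} [Field K] [Algebra ℚ K] (l : K →ₗ[ℚ] ℚ) (p : MvPolynomial σ ℚ)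
    (F : MvPolynomial σ K) :
    lcw l (map (algebraMap ℚ K) p * F) = p * lcw l F := by
  ext m
  rw [coeff_lcw, coeff_mul, coeff_mul, map_sum]
  refine Finset.sum_congr rfl fun s _ => ?_
  rw [coeff_lcw, coeff_map, ← Algebra.smul_def, map_smul, smul_eq_mul]

lemma lcw_add {σ K : Type} [Field K] [Algebra ℚ K] (l : K →ₗ[ℚ] ℚ) (F G : MvPolynomial σ K) :
    lcw l (F + G) = lcw l F + lcw l G := by
  ext m
  simp [coeff_lcw]

lemma lcw_expand {σ K : Type} [Field K] [Algebra ℚ K] (F : MvPolynomial σ K) :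
    ∃ (A : Type) (s : Finset A) (b : A → K) (l : A → (K →ₗ[ℚ] ℚ)),
      F = ∑ a ∈ s, C (b a) * map (algebraMap ℚ K) (lcw (l a) F) := by
  let b := Module.Basis.ofVectorSpace ℚ K
  refine ⟨_, F.support.biUnion fun m => (b.repr (coeff m F)).support, b, b.coord, ?_⟩
  ext m
  rw [coeff_sum]
  simp only [coeff_C_mul, coeff_map, coeff_lcw]
  by_cases hm : m ∈ F.support
  · conv_lhs => rw [← b.linearCombination_repr (coeff m F), Finsupp.linearCombination_apply]
    rw [Finsupp.sum_of_support_subset (s := F.support.biUnion fun m => (b.repr (coeff m F)).support)]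
    · refine Finset.sum_congr rfl fun a _ => ?_
      rw [Algebra.smul_def, mul_comm]; rfl
    · exact Finset.subset_biUnion_of_mem (fun m => (b.repr (coeff m F)).support) hm
    · simp
  · rw [MvPolynomial.notMem_support_iff.1 hm]
    simp

variable {ι : Type} (n : ℕ)

lemma map_ggen {K : Type} [Field K] [Algebra ℚ K] (x y : ι) :
    map (algebraMap ℚ K) (ggen ℚ ι x y) = ggen K ι x y := by
  unfold ggen
  split_ifs <;> simp

lemma map_gD {K : Type} [Field K] [Algebra ℚ K] {m : ℕ} (xs ys : Fin m → ι) :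
    map (algebraMap ℚ K) (gD ℚ ι m xs ys) = gD K ι m xs ys := by
  rw [gD_map]
  simp only [map_ggen]
  rfl

lemma map_gR {K : Type} [Field K] [Algebra ℚ K] {F : MvPolynomial (GIdx ι) ℚ}
    (hF : F ∈ gR ℚ ι n) : map (algebraMap ℚ K) F ∈ gR K ι n := by
  have : gR ℚ ι n ≤ (gR K ι n).comap (map (algebraMap ℚ K)) := by
    rw [gR, Ideal.span_le]
    rintro _ ⟨xs, ys, rfl⟩
    exact Ideal.subset_span ⟨xs, ys, map_gD xs ys⟩
  exact this hF

lemma lcw_gR {K : Type} [Field K] [Algebra ℚ K] (l : K →ₗ[ℚ] ℚ) {F : MvPolynomial (GIdx ι) K}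
    (hF : F ∈ gR K ι n) : lcw l F ∈ gR ℚ ι n := by
  have key : ∀ c, lcw l (c * F) ∈ gR ℚ ι n := by
    refine Submodule.span_induction (p := fun F _ => ∀ c, lcw l (c * F) ∈ gR ℚ ι n) ?_ ?_ ?_ ?_ hF
    · rintro _ ⟨xs, ys, rfl⟩ c
      rw [mul_comm, ← map_gD, lcw_map_mul]
      exact Ideal.mul_mem_right _ _ (Ideal.subset_span ⟨xs, ys, rfl⟩)
    · intro c; simp [lcw]
    · intro x y _ _ hx hy c
      rw [mul_add, lcw_add]
      exact Ideal.add_mem _ (hx c) (hy c)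
    · intro a x _ hx c
      rw [smul_eq_mul, ← mul_assoc]; exact hx _
  simpa using key 1

lemma good1_K (K : Type) [Field K] [Algebra ℚ K] (h : Good1 ℚ ι n) : Good1 K ι n := by
  intro xs ys hx hy F hF
  obtain ⟨A, s, b, l, hs⟩ := lcw_expand F
  rw [hs]
  refine Ideal.sum_mem _ fun a _ => Ideal.mul_mem_left _ _ (map_gR n (h xs ys hx hy _ ?_))
  rw [← lcw_map_mul, map_gD]
  exact lcw_gR n _ hF

lemma good2_K (K : Type) [Field K] [Algebra ℚ K] (h : Good2 ℚ ι n) : Good2 K ι n := by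
  intro r r' c c'
  have := map_gR (K := K) n (h r r' c c')
  simpa only [map_sub, map_mul, map_gD] using this

/-- inclusion of index types -/
def ginc (S : Finset ι) : GIdx S → GIdx ι :=
  fun q => ⟨(q.1.1.1, q.1.2.1), fun h => q.2 (Subtype.ext h)⟩

/-- the retraction -/
def gret (K : Type) [Field K] (S : Finset ι) :
    MvPolynomial (GIdx ι) K →ₐ[K] MvPolynomial (GIdx S) K :=
  aeval fun q => if h : q.1.1 ∈ S ∧ q.1.2 ∈ S then ggen K S ⟨q.1.1, h.1⟩ ⟨q.1.2, h.2⟩ else 0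

variable {K : Type} [Field K]

lemma gret_ginc (S : Finset ι) (F : MvPolynomial (GIdx S) K) :
    gret K S (rename (ginc S) F) = F := by
  rw [gret, aeval_rename]
  have : ((fun q : GIdx ι => if h : q.1.1 ∈ S ∧ q.1.2 ∈ S then
      ggen K S ⟨q.1.1, h.1⟩ ⟨q.1.2, h.2⟩ else 0) ∘ ginc S) = X := by
    funext q
    have h2 : (⟨q.1.1.1, q.1.1.2⟩ : S) ≠ ⟨q.1.2.1, q.1.2.2⟩ := q.2
    simp [ginc, ggen, q.2]
  rw [this, aeval_X_left]; rfl

lemma rename_ggen (S : Finset ι) (x y : S) :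
    rename (ginc S) (ggen K S x y) = ggen K ι x y := by
  by_cases h : x = y
  · simp [ggen, h]
  · have h' : (x : ι) ≠ y := fun h' => h (Subtype.ext h')
    rw [ggen, ggen, dif_pos h, dif_pos h', rename_X]; rfl

lemma rename_gD (S : Finset ι) {m : ℕ} (xs ys : Fin m → S) :
    rename (ginc S) (gD K S m xs ys) = gD K ι m (fun i => xs i) (fun i => ys i) := by
  have := gD_map (rename (R := K) (ginc S)).toRingHom xs ys
  refine this.trans ?_
  unfold gD
  congr 1
  ext1 i j
  exact rename_ggen S _ _

lemma rename_gR (S : Finset ι) {F : MvPolynomial (GIdx S) K} (hF : F ∈ gR K S n) :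
    rename (ginc S) F ∈ gR K ι n := by
  have : gR K S n ≤ (gR K ι n).comap (rename (ginc S)) := by
    rw [gR, Ideal.span_le]
    rintro _ ⟨xs, ys, rfl⟩
    exact Ideal.subset_span ⟨_, _, rename_gD S xs ys⟩
  exact this hF

lemma gret_ggen (S : Finset ι) (x y : ι) :
    gret K S (ggen K ι x y) =
      if h : x ∈ S ∧ y ∈ S then ggen K S ⟨x, h.1⟩ ⟨y, h.2⟩ else 0 := by
  by_cases h : x = y
  · subst h; simp [ggen]
  · rw [ggen, dif_pos h, gret, aeval_X]

lemma gret_gD (S : Finset ι) {m : ℕ} (xs ys : Fin m → ι) :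
    gret K S (gD K ι m xs ys) =
      Matrix.det (Matrix.of fun i j => gret K S (ggen K ι (xs i) (ys j))) :=
  gD_map (gret K S).toRingHom xs ys

lemma gret_gD' (S : Finset ι) {m : ℕ} (xs ys : Fin m → S) :
    gret K S (gD K ι m (fun i => xs i) (fun i => ys i)) = gD K S m xs ys := by
  rw [← rename_gD, gret_ginc]

lemma gret_gR (S : Finset ι) {F : MvPolynomial (GIdx ι) K} (hF : F ∈ gR K ι n) :
    gret K S F ∈ gR K S n := by
  have : gR K ι n ≤ (gR K S n).comap (gret K S) := by
    rw [gR, Ideal.span_le]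
    rintro _ ⟨xs, ys, rfl⟩
    simp only [SetLike.mem_coe, Ideal.mem_comap]
    by_cases hx : ∀ i, xs i ∈ S
    · by_cases hy : ∀ i, ys i ∈ S
      · exact Ideal.subset_span ⟨fun i => ⟨xs i, hx i⟩, fun i => ⟨ys i, hy i⟩,
          gret_gD' S (fun i => ⟨xs i, hx i⟩) (fun i => ⟨ys i, hy i⟩)⟩
      · push Not at hy
        obtain ⟨j, hj⟩ := hy
        rw [gret_gD, Matrix.det_eq_zero_of_column_eq_zero j]
        · exact Ideal.zero_mem _
        · intro i
          simp [gret_ggen, hj]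
    · push Not at hx
      obtain ⟨j, hj⟩ := hx
      rw [gret_gD, Matrix.det_eq_zero_of_row_eq_zero j]
      · exact Ideal.zero_mem _
      · intro i
        simp [gret_ggen, hj]
  exact this hF

lemma good1_all (h : ∀ S : Finset ι, Good1 K S n) : Good1 K ι n := by
  intro xs ys hx hy F hF
  let S : Finset ι := Finset.univ.image xs ∪ Finset.univ.image ys ∪
    (F.vars.image fun q => q.1.1) ∪ (F.vars.image fun q => q.1.2)
  have hxS : ∀ i, xs i ∈ S := fun i => by simp [S]
  have hyS : ∀ i, ys i ∈ S := fun i => by simp [S]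
  have hv : (F.vars : Set (GIdx ι)) ⊆ Set.range (ginc S) := by
    intro q hq
    have h1 : q.1.1 ∈ S := by
      simp only [S, Finset.mem_union]
      exact Or.inl (Or.inr (Finset.mem_image_of_mem (fun q : GIdx ι => q.1.1) hq))
    have h2 : q.1.2 ∈ S := by
      simp only [S, Finset.mem_union]
      exact Or.inr (Finset.mem_image_of_mem (fun q : GIdx ι => q.1.2) hq)
    exact ⟨⟨(⟨q.1.1, h1⟩, ⟨q.1.2, h2⟩), fun h' => q.2 (congrArg Subtype.val h')⟩, rfl⟩
  have hinj : Function.Injective (ginc S) := by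
    intro q q' hqq
    have h1 := congrArg (fun q : GIdx ι => q.1.1) hqq
    have h2 := congrArg (fun q : GIdx ι => q.1.2) hqq
    exact Subtype.ext (Prod.ext (Subtype.ext h1) (Subtype.ext h2))
  obtain ⟨G, hG⟩ := MvPolynomial.exists_rename_eq_of_vars_subset_range F (ginc S) hinj hv
  rw [← hG] at hF ⊢
  have h1 := gret_gR n S hF
  rw [map_mul, gret_ginc] at h1
  have h2 := gret_gD' (K := K) S (fun i => ⟨xs i, hxS i⟩) (fun i => ⟨ys i, hyS i⟩)
  rw [h2] at h1
  refine rename_gR n S (h S _ _ ?_ ?_ G h1)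
  · intro i j hij; exact hx (congrArg Subtype.val hij)
  · intro i j hij; exact hy (congrArg Subtype.val hij)

lemma good2_all (h : ∀ S : Finset ι, Good2 K S n) : Good2 K ι n := by
  intro r r' c c'
  let S : Finset ι := Finset.univ.image r ∪ Finset.univ.image r' ∪
    Finset.univ.image c ∪ Finset.univ.image c'
  have h1 : ∀ i, r i ∈ S := fun i => by simp [S]
  have h2 : ∀ i, r' i ∈ S := fun i => by simp [S]
  have h3 : ∀ i, c i ∈ S := fun i => by simp [S]
  have h4 : ∀ i, c' i ∈ S := fun i => by simp [S]
  have := rename_gR n S (h S (fun i => ⟨r i, h1 i⟩) (fun i => ⟨r' i, h2 i⟩)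
    (fun i => ⟨c i, h3 i⟩) (fun i => ⟨c' i, h4 i⟩))
  simpa only [map_sub, map_mul, rename_gD] using this

theorem good1_main (K : Type) [Field K] [CharZero K] (ι : Type) (hn : 2 ≤ n) : Good1 K ι n := by
  refine good1_all n fun S => good1_K n K ?_
  letI : LinearOrder S := LinearOrder.lift' (Fintype.equivFin S) (Fintype.equivFin S).injective
  exact good1_fin n hn

theorem good2_main (K : Type) [Field K] [CharZero K] (ι : Type) (hn : 2 ≤ n) : Good2 K ι n := by
  refine good2_all n fun S => good2_K n K ?_
  letI : LinearOrder S := LinearOrder.lift' (Fintype.equivFin S) (Fintype.equivFin S).injective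
  exact good2_fin n hn

end Transfer



section Final

lemma gen_ggen (K : Type) [Field K] (P : Set Circle1) (x y : ↥P) :
    gen K P x y = ggen K ↥P x y := by
  unfold gen ggen
  by_cases h : x = y
  · rw [dif_neg (not_not.2 h), dif_neg (not_not.2 h)]
  · rw [dif_pos h, dif_pos h]

lemma Dmat_gD (K : Type) [Field K] (P : Set Circle1) (m : ℕ) (xs ys : Fin m → ↥P) :
    Dmat K P m xs ys = gD K ↥P m xs ys := by
  unfold Dmat gD
  simp only [gen_ggen]

lemma Rideal_gR (K : Type) [Field K] (P : Set Circle1) (n : ℕ) :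
    Rideal K P n = gR K ↥P n := by
  unfold Rideal gR
  simp only [Dmat_gD]

lemma nzd_frozen (K : Type) [Field K] [CharZero K] (P : Set Circle1) (n : ℕ) (hn : 2 ≤ n)
    (xs ys : Fin n → ↥P) (hx : Function.Injective xs) (hy : Function.Injective ys) :
    toZn K P n (Dmat K P n xs ys) ∈ nonZeroDivisors (ZnRing K P n) := by
  rw [mem_nonZeroDivisors_iff_right]
  intro z hz
  obtain ⟨F, rfl⟩ := Ideal.Quotient.mk_surjective z
  rw [toZn, ← map_mul, Ideal.Quotient.eq_zero_iff_mem, Rideal_gR, Dmat_gD, mul_comm] at hz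
  rw [Ideal.Quotient.eq_zero_iff_mem, Rideal_gR]
  exact good1_main n K ↥P hn xs ys hx hy F hz

lemma rel_frozen (K : Type) [Field K] [CharZero K] (P : Set Circle1) (n : ℕ) (hn : 2 ≤ n)
    (r r' c c' : Fin n → ↥P) :
    toZn K P n (Dmat K P n r c) * toZn K P n (Dmat K P n r' c') =
      toZn K P n (Dmat K P n r c') * toZn K P n (Dmat K P n r' c) := by
  rw [toZn, ← map_mul, ← map_mul, Ideal.Quotient.mk_eq_mk_iff_sub_mem, Rideal_gR]
  simp only [Dmat_gD]
  exact good2_main n K ↥P hn r r' c c'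

end Final

/-- Let `x_1, …, x_{n-1}, t, y, v_1, …, v_n, u_1 ∈ P` with
`x_1, …, x_{n-1}, y` pairwise distinct and `v_1, …, v_n, u_1` pairwise distinct.  Then in
the total fraction ring `Q_n(P)` of the rank `n` swapping ring,
`Δ((x,t),(v_1,v_2,…,v_n)) / Δ((x,y),(v_1,v_2,…,v_n))
  = Δ((x,t),(u_1,v_2,…,v_n)) / Δ((x,y),(u_1,v_2,…,v_n))`
(the denominators are nonzero divisors, and the two fractions agree).
Families are indexed from `0`: `x i` denotes `x_{i+1}`, `v i` denotes `v_{i+1}`. -/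
theorem determinant_quotient_first_column (K : Type) [Field K] [CharZero K]
    (P : Set Circle1) (n : ℕ) (hn : 2 ≤ n)
    (x : ℕ → ↥P) (t y : ↥P) (v : ℕ → ↥P) (u1 : ↥P)
    (hxy : Function.Injective (snocTup (n := n) x y))
    (hvu : Function.Injective (fun i : Fin (n+1) => if (i : ℕ) < n then v (i : ℕ) else u1)) :
    toZn K P n (Dmat K P n (snocTup x y) (fun i : Fin n => v (i : ℕ)))
        ∈ nonZeroDivisors (ZnRing K P n) ∧
    toZn K P n (Dmat K P n (snocTup x y) (fun i : Fin n => if (i : ℕ) = 0 then u1 else v (i : ℕ)))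
        ∈ nonZeroDivisors (ZnRing K P n) ∧
    ∀ (h1 : toZn K P n (Dmat K P n (snocTup x y) (fun i : Fin n => v (i : ℕ)))
            ∈ nonZeroDivisors (ZnRing K P n))
      (h2 : toZn K P n (Dmat K P n (snocTup x y)
              (fun i : Fin n => if (i : ℕ) = 0 then u1 else v (i : ℕ)))
            ∈ nonZeroDivisors (ZnRing K P n)),
      EQuot K P n (snocTup x t) (snocTup x y) (fun i : Fin n => v (i : ℕ)) h1
        = EQuot K P n (snocTup x t) (snocTup x y)
            (fun i : Fin n => if (i : ℕ) = 0 then u1 else v (i : ℕ)) h2 := by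
  have hc : Function.Injective (fun i : Fin n => v (i : ℕ)) := by
    intro i j hij
    have h := hvu (a₁ := i.castSucc) (a₂ := j.castSucc) (by simpa using hij)
    exact Fin.castSucc_injective _ h
  have hc' : Function.Injective (fun i : Fin n => if (i : ℕ) = 0 then u1 else v (i : ℕ)) := by
    have hne : ∀ i : Fin n, v (i : ℕ) ≠ u1 := by
      intro i hi
      have h := hvu (a₁ := i.castSucc) (a₂ := Fin.last n) (by simpa using hi)
      exact (Fin.castSucc_lt_last i).ne h
    intro i j hij
    simp only at hij
    split_ifs at hij with h1 h2 h2
    · exact Fin.ext (by omega)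
    · exact absurd hij.symm (hne j)
    · exact absurd hij (hne i)
    · exact hc hij
  refine ⟨nzd_frozen K P n hn _ _ hxy hc, nzd_frozen K P n hn _ _ hxy hc', ?_⟩
  intro h1 h2
  unfold EQuot
  rw [Localization.mk_eq_mk_iff, Localization.r_iff_exists]
  refine ⟨1, ?_⟩
  have h := rel_frozen K P n hn (snocTup x t) (snocTup x y) (fun i : Fin n => v (i : ℕ))
    (fun i : Fin n => if (i : ℕ) = 0 then u1 else v (i : ℕ))
  simp only [OneMemClass.coe_one, one_mul]
  rw [mul_comm, h, mul_comm]

end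
end

section
/- Let n ≥ 2 and let a, b, x_1,…,x_{n−1}, t, y ∈ P with x_1,…,x_{n−1}, y pairwise distinct. Then the value of the swapping bracket {ab, E(x_1,…,x_{n−1}|t,y)} in Q_n(P) does not depend on the choice of the pairwise distinct right-side n-tuple (v_1,…,v_n) of points of P used to represent the determinant quotient E(x_1,…,x_{n−1}|t,y). -/
noncomputable section

open scoped Classical
open MvPolynomial

set_option maxHeartbeats 1000000
set_option synthInstance.maxHeartbeats 400000

theorem aux_bordered (K : Type) [Field K] (P : Set Circle1) (n : ℕ)
    (B V : Fin n → ↥P) (r c : ↥P)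
    (M : Matrix (Fin n) (Fin n) (QnRing K P n))
    (hM : M = Matrix.of fun i j => toQn K P n (gen K P (B i) (V j)))
    (hu : IsUnit M.det) :
    toQn K P n (gen K P r c) = ∑ j, ∑ i, toQn K P n (gen K P r (V j)) * M⁻¹ j i *
      toQn K P n (gen K P (B i) c) := by
  have hmem : toQn K P n (Dmat K P (n+1)
      (Sum.elim B (fun _ : Fin 1 => r) ∘ finSumFinEquiv.symm)
      (Sum.elim V (fun _ : Fin 1 => c) ∘ finSumFinEquiv.symm)) = 0 := by
    have : toZn K P n (Dmat K P (n+1)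
      (Sum.elim B (fun _ : Fin 1 => r) ∘ finSumFinEquiv.symm)
      (Sum.elim V (fun _ : Fin 1 => c) ∘ finSumFinEquiv.symm)) = 0 := by
      refine Ideal.Quotient.eq_zero_iff_mem.mpr (Ideal.subset_span ?_)
      exact ⟨_, _, rfl⟩
    simp only [toQn, RingHom.comp_apply, this, map_zero]
  letI := Matrix.invertibleOfIsUnitDet M hu
  have h2 := Matrix.det_fromBlocks₁₁ M
    (Matrix.of fun i (_ : Fin 1) => toQn K P n (gen K P (B i) c))
    (Matrix.of fun (_ : Fin 1) j => toQn K P n (gen K P r (V j)))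
    (Matrix.of fun (_ : Fin 1) (_ : Fin 1) => toQn K P n (gen K P r c))
  have h3 : toQn K P n (Dmat K P (n+1)
      (Sum.elim B (fun _ : Fin 1 => r) ∘ finSumFinEquiv.symm)
      (Sum.elim V (fun _ : Fin 1 => c) ∘ finSumFinEquiv.symm)) =
      (Matrix.fromBlocks M
    (Matrix.of fun i (_ : Fin 1) => toQn K P n (gen K P (B i) c))
    (Matrix.of fun (_ : Fin 1) j => toQn K P n (gen K P r (V j)))
    (Matrix.of fun (_ : Fin 1) (_ : Fin 1) => toQn K P n (gen K P r c))).det := by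
    refine (RingHom.map_det (n := Fin (n+1)) (R := SwapRing K P) (S := QnRing K P n) (toQn K P n) _).trans ?_
    rw [← Matrix.det_submatrix_equiv_self finSumFinEquiv]
    congr 1
    ext i j
    rcases i with i | i <;> rcases j with j | j <;>
      simp [hM]
  rw [← h3, hmem] at h2
  have h4 := (hu.mul_right_eq_zero).mp h2.symm
  rw [Matrix.det_fin_one, Matrix.sub_apply, sub_eq_zero] at h4
  simp only [Matrix.mul_apply, Matrix.of_apply, Matrix.invOf_eq_nonsing_inv, Finset.sum_mul] at h4
  rw [h4, Finset.sum_comm]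

theorem aux_EQuot_eq (K : Type) [Field K] (P : Set Circle1) (n : ℕ)
    (A B v v' : Fin n → ↥P)
    (h1 : toZn K P n (Dmat K P n B v) ∈ nonZeroDivisors (ZnRing K P n))
    (h2 : toZn K P n (Dmat K P n B v') ∈ nonZeroDivisors (ZnRing K P n)) :
    EQuot K P n A B v h1 = EQuot K P n A B v' h2 := by
  set G : (Fin n → ↥P) → (Fin n → ↥P) → Matrix (Fin n) (Fin n) (QnRing K P n) :=
    fun R C => Matrix.of fun i j => toQn K P n (gen K P (R i) (C j)) with hG
  have hdet : ∀ R C, algebraMap (ZnRing K P n) (QnRing K P n) (toZn K P n (Dmat K P n R C))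
      = (G R C).det := by
    intro R C
    change toQn K P n (Dmat K P n R C) = _
    exact RingHom.map_det (n := Fin n) (R := SwapRing K P) (S := QnRing K P n) (toQn K P n) _
  have hu : IsUnit (G B v).det := by
    rw [← hdet]
    exact IsLocalization.map_units (QnRing K P n)
      (⟨_, h1⟩ : nonZeroDivisors (ZnRing K P n))
  have key : G A v' = G A v * (G B v)⁻¹ * G B v' := by
    ext i j
    have := aux_bordered K P n B v (A i) (v' j) (G B v) rfl hu
    change toQn K P n (gen K P (A i) (v' j)) = _
    rw [this, Matrix.mul_apply, Finset.sum_comm]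
    simp only [Matrix.mul_apply, Finset.sum_mul]
    rfl
  unfold EQuot
  rw [Localization.mk_eq_mk', IsLocalization.mk'_eq_iff_eq, map_mul, map_mul]
  simp only [hdet]
  rw [key, Matrix.det_mul, Matrix.det_mul]
  have h5 : (G B v)⁻¹.det * (G B v).det = 1 := by
    rw [← Matrix.det_mul, Matrix.nonsing_inv_mul _ hu, Matrix.det_one]
  linear_combination (-(G A v).det * (G B v').det) * h5

/-- For `a, b, x_1, …, x_{n-1}, t, y ∈ P` with `x_1, …, x_{n-1}, y`
pairwise distinct, the value of the swapping bracket `{ab, E(x_1,…,x_{n-1} | t, y)}` in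
`Q_n(P)` (for any extension `Bq` of the swapping bracket to the total fraction ring) does
not depend on the pairwise distinct right-side `n`-tuple of points of `P` used to
represent the determinant quotient `E(x_1,…,x_{n-1} | t, y)`. -/
theorem bracket_with_determinant_quotient_independent (K : Type) [Field K] [CharZero K]
    (P : Set Circle1) (n : ℕ) (hn : 2 ≤ n)
    (a b : ↥P) (x : ℕ → ↥P) (t y : ↥P)
    (hxy : Function.Injective (snocTup (n := n) x y)) :
    ∀ Bq : QnRing K P n → QnRing K P n → QnRing K P n, IsQnBracket K P n 1 0 Bq →
    ∀ v v' : Fin n → ↥P, Function.Injective v → Function.Injective v' →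
    ∀ (h1 : toZn K P n (Dmat K P n (snocTup x y) v) ∈ nonZeroDivisors (ZnRing K P n))
      (h2 : toZn K P n (Dmat K P n (snocTup x y) v') ∈ nonZeroDivisors (ZnRing K P n)),
      Bq (toQn K P n (gen K P a b)) (EQuot K P n (snocTup x t) (snocTup x y) v h1)
        = Bq (toQn K P n (gen K P a b)) (EQuot K P n (snocTup x t) (snocTup x y) v' h2) := by
  intro Bq _ v v' _ _ h1 h2
  rw [aux_EQuot_eq K P n (snocTup x t) (snocTup x y) v v' h1 h2]

end
end
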